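/- arXiv:2008.10016 — 2 statements merged into one kernel-verified Lean document; each statement's English description precedes it below -/
import Mathlib

section
/- Let V, W ⊆ S^5 be disjoint equivalent polybox codes with |V| ≤ 15. For every v ∈ V and every w ∈ W, if C_v ⊆ W and C_w ⊆ V are twin pair free minimal covers of v and of w respectively, then |C_v| < |V| or |C_w| < |V|. -/
/- Common framework: polybox codes over a finite alphabet `S` with a
complementation `c : S → S` (an involution without fixed points). -/

namespace PolyboxPaper

variable {S : Type} [Fintype S] [DecidableEq S] {d : ℕ}

/-- Two words are dichotomous: they differ by complementation at some position. -/
def Dich (c : S → S) (v w : Fin d → S) : Prop := ∃ i, v i = c (w i)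

instance (c : S → S) (v w : Fin d → S) : Decidable (Dich c v w) :=
  decidable_of_iff (∃ i, v i = c (w i)) Iff.rfl

/-- A polybox code: every two distinct words are dichotomous. -/
def IsCode (c : S → S) (V : Finset (Fin d → S)) : Prop :=
  ∀ v ∈ V, ∀ w ∈ V, v ≠ w → Dich c v w

/-- A cube tiling code: a polybox code with `2 ^ d` words. -/
def CubeTiling (c : S → S) (V : Finset (Fin d → S)) : Prop :=
  IsCode c V ∧ V.card = 2 ^ d

/-- `v` and `w` form a twin pair in the `i`-th direction. -/
def TwinPair (c : S → S) (v w : Fin d → S) (i : Fin d) : Prop :=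
  v i = c (w i) ∧ ∀ j, j ≠ i → v j = w j

/-- A code is twin pair free if no two of its words form a twin pair. -/
def TwinPairFree (c : S → S) (V : Finset (Fin d → S)) : Prop :=
  ∀ v ∈ V, ∀ w ∈ V, ∀ i, ¬ TwinPair c v w i

/-- A single glue-and-cut operation: a twin pair `v, w` of `V` in the `i`-th
direction is replaced by a twin pair `q, t` in the `i`-th direction agreeing
with `v` (and `w`) at all positions `j ≠ i`. -/
def GCStep (c : S → S) (V W : Finset (Fin d → S)) : Prop :=
  ∃ (v w q t : Fin d → S) (i : Fin d), v ∈ V ∧ w ∈ V ∧ TwinPair c v w i ∧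
    TwinPair c q t i ∧ (∀ j, j ≠ i → q j = v j) ∧ W = (V \ {v, w}) ∪ {q, t}

/-- `W` is obtained from `V` by gluing and cutting (finite, possibly empty,
sequence of single glue-and-cut operations); equivalently, `V` and `W` are
strongly equivalent. -/
def GC (c : S → S) (V W : Finset (Fin d → S)) : Prop :=
  Relation.ReflTransGen (GCStep c) V W

/-- Passing from `V` to `W` by gluing and cutting keeping `Q` fixed:
every intermediate code contains `Q`. -/
def GCFix (c : S → S) (Q V W : Finset (Fin d → S)) : Prop :=
  Relation.ReflTransGen (fun A B => GCStep c A B ∧ Q ⊆ B) V W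

/-- A realization: for each coordinate a map `f i : S → Set (X i)` taking
nonempty proper values and sending complementary letters to complementary sets. -/
def IsRealization (c : S → S) (X : Fin d → Type) (f : ∀ i, S → Set (X i)) : Prop :=
  ∀ i s, (f i s).Nonempty ∧ f i s ≠ Set.univ ∧ f i (c s) = (f i s)ᶜ

/-- The box associated to a word by a realization. -/
def box {X : Fin d → Type} (f : ∀ i, S → Set (X i)) (v : Fin d → S) :
    Set (∀ i, X i) :=
  {x | ∀ i, x i ∈ f i (v i)}

/-- The word `w` is covered by the code `V` (`w ⊑ V`). -/
def CoveredWord (c : S → S) (w : Fin d → S) (V : Finset (Fin d → S)) : Prop :=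
  ∀ (X : Fin d → Type) (f : ∀ i, S → Set (X i)), IsRealization c X f →
    box f w ⊆ ⋃ v ∈ V, box f v

/-- `V ⊑ W`: every word of `V` is covered by `W`. -/
def Covered (c : S → S) (V W : Finset (Fin d → S)) : Prop :=
  ∀ v ∈ V, CoveredWord c v W

/-- Equivalent codes: `V ⊑ W` and `W ⊑ V`. -/
def Equivalent (c : S → S) (V W : Finset (Fin d → S)) : Prop :=
  Covered c V W ∧ Covered c W V

/-- `V ⊑̇ W`: `V ⊑ W` and no word of `V` belongs to any code obtained from `W`
by gluing and cutting. -/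
def DotCovered (c : S → S) (V W : Finset (Fin d → S)) : Prop :=
  Covered c V W ∧ ∀ v ∈ V, ∀ W', GC c W W' → v ∉ W'

/-- The density `δ(V, W)`. -/
noncomputable def delta (c : S → S) (V W : Finset (Fin d → S)) : ℕ∞ :=
  W.inf fun w => ((V.filter fun v => ¬ Dich c v w).card : ℕ∞)

/-- `C` is a minimal cover of the word `w`. -/
def MinCoverWord (c : S → S) (C : Finset (Fin d → S)) (w : Fin d → S) : Prop :=
  IsCode c C ∧ CoveredWord c w C ∧ ∀ q ∈ C, ¬ Dich c q w

/-- `C` is a minimal cover of the code `P`. -/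
def MinCoverCode (c : S → S) (C P : Finset (Fin d → S)) : Prop :=
  IsCode c C ∧ Covered c P C ∧ ∀ q ∈ C, ∃ p ∈ P, ¬ Dich c q p

/-- A simple polybox code. -/
def SimpleCode (c : S → S) (V : Finset (Fin d → S)) : Prop :=
  ∀ i : Fin d, ∃ s : S, ∀ v ∈ V, v i = s ∨ v i = c s

/-- A simple cube tiling code `{s₁, s₁'} × ⋯ × {s_d, s_d'}`. -/
def SimpleCubeTiling (c : S → S) (U : Finset (Fin d → S)) : Prop :=
  ∃ s : Fin d → S, ∀ v : Fin d → S, v ∈ U ↔ ∀ i, v i = s i ∨ v i = c (s i)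

/-- Word whose first four coordinates are `x0 x1 x2 x3` and which agrees with
`r` elsewhere. -/
def specialWord (r : Fin d → S) (x0 x1 x2 x3 : S) : Fin d → S := fun i =>
  if (i : ℕ) = 0 then x0 else if (i : ℕ) = 1 then x1 else if (i : ℕ) = 2 then x2
  else if (i : ℕ) = 3 then x3 else r i

/-- The special pair of 12-word codes (Theorem 1 of the paper). -/
def SpecialPair (c : S → S) (V W : Finset (Fin d → S)) : Prop :=
  ∃ (a b : S) (r : Fin d → S), a ≠ b ∧ a ≠ c b ∧
    V = {specialWord r a (c a) b (c b), specialWord r a b (c b) a,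
         specialWord r a (c b) (c b) (c b), specialWord r (c a) a (c b) (c b),
         specialWord r (c a) (c a) a (c b), specialWord r (c a) b (c b) b,
         specialWord r b a b (c b), specialWord r b b b b,
         specialWord r b (c b) (c a) b, specialWord r (c b) a b (c a),
         specialWord r (c b) (c a) b b, specialWord r (c b) (c b) (c b) b} ∧
    W = {specialWord r (c a) (c a) (c a) b, specialWord r (c a) b a (c a),
         specialWord r b a (c a) a, specialWord r a (c a) (c a) a,
         specialWord r (c a) a (c a) (c a), specialWord r a b b (c a),
         specialWord r b b a a, specialWord r a (c b) (c a) (c a),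
         specialWord r (c b) a (c b) a, specialWord r (c b) (c a) a a,
         specialWord r (c b) (c b) a (c a), specialWord r b (c b) a (c b)}

/-- An isomorphism of `S^d`: a permutation of coordinates followed by
position bijections commuting with complementation. -/
def IsIso (c : S → S) (Φ : (Fin d → S) → Fin d → S) : Prop :=
  ∃ (σ : Equiv.Perm (Fin d)) (h : Fin d → S → S),
    (∀ i, Function.Bijective (h i)) ∧ (∀ i s, h i (c s) = c (h i s)) ∧
    ∀ v i, Φ v i = h i (v (σ i))

/-- The pair `(V, W)` is, up to isomorphism, the special pair. -/
def SpecialPairUpToIso (c : S → S) (V W : Finset (Fin d → S)) : Prop :=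
  ∃ Φ, IsIso c Φ ∧
    (SpecialPair c (V.image Φ) (W.image Φ) ∨ SpecialPair c (W.image Φ) (V.image Φ))

/-!
If both covers had `|V|` words, then `C_v = W` and `C_w = V`, because equivalent codes have equally
many words. So `V` and `W` would be twin pair free, no word of `W` would be dichotomous to `v`, and
no word of `V` to `w`. A nontrivial twin pair free minimal cover of a word disagrees with it at
three or more positions. Hence in dimension five there is a position `i` at which both `W`
disagrees with `v` and `V` disagrees with `w`.

Write `V_s` for the words of `V` with the letter `s` at `i`, and let `s = v i`. The letter `s'` does
not occur at `i` in `W`, so after deleting the position `i` the code `V_s` tiles the union of the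
boxes of `V_{s'}` and `W_s`. A twin pair free code tiling the boxes of a nonempty disjoint family in
dimension at most four has eight or more words, so `|V_s| ≥ 8`; symmetrically `|W_t| ≥ 8` for
`t = w i`. The balance `|V_s| + |W_{s'}| = |W_s| + |V_{s'}|`, used for `s` and for `t`, then gives
32 words in `V` and `W` together, that is, `|V| = |W| ≥ 16`.
-/

section Covers

open Finset

variable {ι α : Type*} {c : α → α}

/-- A complementation of an alphabet: an involution without fixed points. -/
structure IsComplementation (c : α → α) : Prop where
  involutive : Function.Involutive c
  ne_self : ∀ s, c s ≠ s

/-- A choice of one letter from every pair of complementary letters. Selectors are the points of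
the universal realization, in which a letter stands for the set of all selectors choosing it. -/
structure Selector (c : α → α) where
  chooses : α → Bool
  apply_compl : ∀ s, chooses (c s) = !chooses s

instance : CoeFun (Selector c) fun _ => α → Bool := ⟨Selector.chooses⟩

/-- The selector choosing exactly the letters that `x` rejects. -/
def Selector.compl (x : Selector c) : Selector c where
  chooses s := !x s
  apply_compl s := by rw [x.apply_compl]

/-- The selector that differs from `x` exactly on the complementary pair of `s`. -/
def Selector.flip [DecidableEq α] (hc : IsComplementation c) (x : Selector c) (s : α) :
    Selector c where
  chooses t := if t = s ∨ t = c s then !x t else x t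
  apply_compl t := by
    have hcompl : (c t = s ∨ c t = c s) ↔ (t = s ∨ t = c s) := by
      rw [hc.involutive.injective.eq_iff, hc.involutive.eq_iff, or_comm]
    simp only [hcompl, x.apply_compl]
    split_ifs <;> rfl

lemma IsComplementation.exists_selector (hc : IsComplementation c) {A : Set α}
    (hA : ∀ a ∈ A, ∀ b ∈ A, a ≠ c b) : ∃ x : Selector c, ∀ a ∈ A, x a := by
  classical
  let x (s : α) : Prop := s ∈ A ∨ c s ∉ A ∧ WellOrderingRel s (c s)
  have hx (s : α) : x (c s) ↔ ¬ x s := by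
    have hA' := hA (c s)
    have hne := hc.ne_self s
    have htri := trichotomous_of WellOrderingRel s (c s)
    have hasymm := @asymm_of α WellOrderingRel s (c s) _
    simp only [x, hc.involutive s]
    grind
  exact ⟨⟨fun s => decide (x s), fun s => by simp [hx]⟩, fun a ha => by simp [x, ha]⟩

lemma IsComplementation.exists_selector_pair (hc : IsComplementation c) {a b : α} (h : a ≠ c b) :
    ∃ x : Selector c, x a ∧ x b := by
  obtain ⟨x, hx⟩ := hc.exists_selector (A := {a, b}) (by
    have := hc.ne_self; have := hc.involutive.eq_iff (x := a) (y := b); grind)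
  exact ⟨x, hx a (by simp), hx b (by simp)⟩

/-- The point `X` of the universal realization lies in the box of the word `t`, as far as the
coordinates in `J` are concerned. -/
abbrev Selects (J : Finset ι) (X : ι → Selector c) (t : ι → α) : Prop := ∀ j ∈ J, X j (t j)

/-- Dichotomous words, at a position in `J`. -/
abbrev DichOn (c : α → α) (J : Finset ι) (t u : ι → α) : Prop := ∃ j ∈ J, t j = c (u j)

/-- Polybox codes on the coordinates in `J`; distinct words of the code must be told apart by
these coordinates. -/
def CodeOn (c : α → α) (J : Finset ι) (C : Finset (ι → α)) : Prop :=
  (C : Set (ι → α)).Pairwise (DichOn c J)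

/-- Twin pair free codes on the coordinates in `J`. -/
def TwinFreeOn (c : α → α) (J : Finset ι) (C : Finset (ι → α)) : Prop :=
  ∀ t ∈ C, ∀ u ∈ C, ∀ i ∈ J, t i = c (u i) → ∃ j ∈ J, j ≠ i ∧ t j ≠ u j

/-- Disjoint codes on the coordinates in `J`: their words already differ on `J`. -/
def DisjointOn (J : Finset ι) (T U : Finset (ι → α)) : Prop :=
  ∀ t ∈ T, ∀ u ∈ U, ∃ j ∈ J, t j ≠ u j

/-- The words of `C` with the letter `s` at position `i`. -/
def letterClass [DecidableEq α] (C : Finset (ι → α)) (i : ι) (s : α) : Finset (ι → α) :=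
  {t ∈ C | t i = s}

/-- The number of boxes of `C` containing the point `X`, on the coordinates in `J`. -/
def multiplicity (J : Finset ι) (C : Finset (ι → α)) (X : ι → Selector c) : ℕ :=
  #{t ∈ C | Selects J X t}

/-- Equivalence on the coordinates in `J`: every point of the universal realization lies in equally
many boxes of both families. For codes, this says that the boxes have the same union. -/
def EquivOn (c : α → α) (J : Finset ι) (T U : Finset (ι → α)) : Prop :=
  ∀ X : ι → Selector c, multiplicity J T X = multiplicity J U X

variable {J K : Finset ι} {C T U : Finset (ι → α)} {t u v : ι → α} {i j : ι} {s : α}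

lemma IsComplementation.exists_selects_both (hc : IsComplementation c) (h : ¬ DichOn c J t u) :
    ∃ X : ι → Selector c, Selects J X t ∧ Selects J X u := by
  have hex (j : ι) : ∃ x : Selector c, j ∈ J → x (t j) ∧ x (u j) := by
    by_cases hj : j ∈ J
    · obtain ⟨x, hx⟩ := hc.exists_selector_pair fun e => h ⟨j, hj, e⟩
      exact ⟨x, fun _ => hx⟩
    · obtain ⟨x, -⟩ := hc.exists_selector_pair (hc.ne_self (t j)).symm
      exact ⟨x, fun h => absurd h hj⟩
  choose X hX using hex
  exact ⟨X, fun j hj => (hX j hj).1, fun j hj => (hX j hj).2⟩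

lemma IsComplementation.exists_selects (hc : IsComplementation c) (J : Finset ι) (t : ι → α) :
    ∃ X : ι → Selector c, Selects J X t :=
  let ⟨X, hX, _⟩ := hc.exists_selects_both (J := J) (t := t) (u := t)
    fun ⟨_, _, e⟩ => hc.ne_self _ e.symm
  ⟨X, hX⟩

lemma Selects.not_dichOn {X : ι → Selector c} (ht : Selects J X t) (hu : Selects J X u) :
    ¬ DichOn c J t u := by
  rintro ⟨j, hj, e⟩
  have htj := ht j hj
  rw [e, (X j).apply_compl, hu j hj] at htj
  exact absurd htj (by simp)

lemma selects_update [DecidableEq ι] (hi : i ∈ J) {X : ι → Selector c} {x : Selector c} :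
    Selects J (Function.update X i x) t ↔ x (t i) ∧ Selects (J.erase i) X t := by
  grind

lemma selects_piecewise [DecidableEq ι] {X Y : ι → Selector c} (hX : Selects J X t)
    (hY : Selects K Y t) : Selects K (J.piecewise X Y) t := by
  intro j hj
  by_cases hjJ : j ∈ J
  · simpa [hjJ] using hX j hjJ
  · simpa [hjJ] using hY j hj

section LetterClass

variable [DecidableEq α]

@[simp] lemma mem_letterClass : t ∈ letterClass C i s ↔ t ∈ C ∧ t i = s := mem_filter

lemma letterClass_subset : letterClass C i s ⊆ C := filter_subset _ _

lemma card_letterClass_mono (h : T ⊆ C) : #(letterClass T i s) ≤ #(letterClass C i s) :=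
  card_le_card (filter_subset_filter _ h)

lemma sum_card_letterClass_le (C : Finset (ι → α)) (i : ι) (A : Finset α) :
    ∑ s ∈ A, #(letterClass C i s) ≤ #C := by
  have hmaps : Set.MapsTo (fun t : ι → α => t i) ({t ∈ C | t i ∈ A} : Finset _) A := by
    intro t ht
    simpa using (mem_filter.1 ht).2
  calc ∑ s ∈ A, #(letterClass C i s)
      = ∑ s ∈ A, #{t ∈ {t ∈ C | t i ∈ A} | t i = s} := by
        refine sum_congr rfl fun s hs => congrArg card ?_
        grind [letterClass]
    _ = #{t ∈ C | t i ∈ A} := (card_eq_sum_card_fiberwise hmaps).symm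
    _ ≤ #C := card_filter_le _ _

lemma IsComplementation.card_letterClass_pairs_le (hc : IsComplementation c)
    (C : Finset (ι → α)) (i : ι) {a b : α} (hab : a ≠ b) (hab' : a ≠ c b) :
    #(letterClass C i a) + #(letterClass C i (c a)) +
      (#(letterClass C i b) + #(letterClass C i (c b))) ≤ #C := by
  have hca : c a ≠ b := fun e => hab' (hc.involutive.eq_iff.1 e)
  have hca' : c a ≠ c b := hc.involutive.injective.ne hab
  have hdisj : Disjoint {a, c a} ({b, c b} : Finset α) := by
    simp [hab.symm, hab'.symm, hca.symm, hca'.symm]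
  have hsum := sum_card_letterClass_le C i ({a, c a} ∪ {b, c b})
  rwa [sum_union hdisj, sum_pair (hc.ne_self a).symm, sum_pair (hc.ne_self b).symm] at hsum

lemma disjoint_letterClass {a b : α} (hab : a ≠ b) :
    Disjoint (letterClass T i a) (letterClass U i b) := by
  refine disjoint_left.2 fun t hta htb => hab ?_
  rw [← (mem_letterClass.1 hta).2, (mem_letterClass.1 htb).2]

end LetterClass

lemma CodeOn.eq_of_selects (h : CodeOn c J C) {X : ι → Selector c} (ht : t ∈ C) (hu : u ∈ C)
    (hXt : Selects J X t) (hXu : Selects J X u) : t = u := by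
  by_contra hne
  exact hXt.not_dichOn hXu (h ht hu hne)

lemma CodeOn.restrict (h : CodeOn c J C) (hT : T ⊆ C)
    (hoff : ∀ t ∈ T, ∀ u ∈ T, ∀ j ∈ J, j ∉ K → t j ≠ c (u j)) : CodeOn c K T := by
  intro t ht u hu htu
  obtain ⟨j, hj, e⟩ := h (hT ht) (hT hu) htu
  exact ⟨j, by_contra fun hjK => hoff t ht u hu j hj hjK e, e⟩

lemma TwinFreeOn.restrict (h : TwinFreeOn c J C) (hT : T ⊆ C) (hKJ : K ⊆ J)
    (hoff : ∀ t ∈ T, ∀ u ∈ T, ∀ j ∈ J, j ∉ K → t j = u j) : TwinFreeOn c K T := by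
  intro t ht u hu i hi e
  obtain ⟨j, hj, hji, hne⟩ := h t (hT ht) u (hT hu) i (hKJ hi) e
  exact ⟨j, by_contra fun hjK => hne (hoff t ht u hu j hj hjK), hji, hne⟩

lemma CodeOn.filter_selector [DecidableEq ι] (h : CodeOn c J C) (x : Selector c) (i : ι) :
    CodeOn c (J.erase i) {t ∈ C | x (t i)} := by
  refine h.restrict (filter_subset _ _) fun t ht u hu j hj hjK e => ?_
  obtain rfl : j = i := by grind
  have htx := (mem_filter.1 ht).2
  rw [e, x.apply_compl, (mem_filter.1 hu).2] at htx
  exact absurd htx (by simp)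

section RestrictLetterClass

variable [DecidableEq ι] [DecidableEq α]

lemma CodeOn.restrict_letterClass (hc : IsComplementation c) (h : CodeOn c J C) (i : ι) (s : α) :
    CodeOn c (J.erase i) (letterClass C i s) := by
  refine h.restrict letterClass_subset fun t ht u hu j hj hjK => ?_
  obtain rfl : j = i := by grind
  rw [(mem_letterClass.1 ht).2, (mem_letterClass.1 hu).2]
  exact (hc.ne_self s).symm

lemma TwinFreeOn.restrict_letterClass (h : TwinFreeOn c J C) (i : ι) (s : α) :
    TwinFreeOn c (J.erase i) (letterClass C i s) :=
  h.restrict letterClass_subset (erase_subset i J) fun t ht u hu j hj hjK => by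
    obtain rfl : j = i := by grind
    rw [(mem_letterClass.1 ht).2, (mem_letterClass.1 hu).2]

lemma TwinFreeOn.disjointOn_letterClass (hc : IsComplementation c) (h : TwinFreeOn c J C)
    (hi : i ∈ J) (s : α) :
    DisjointOn (J.erase i) (letterClass C i s) (letterClass C i (c s)) := by
  intro t ht u hu
  obtain ⟨htC, hti⟩ := mem_letterClass.1 ht
  obtain ⟨huC, hui⟩ := mem_letterClass.1 hu
  obtain ⟨j, hj, hji, hne⟩ := h t htC u huC i hi (by rw [hti, hui, hc.involutive])
  exact ⟨j, mem_erase.2 ⟨hji, hj⟩, hne⟩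

end RestrictLetterClass

/-! ### Equivalent families -/

@[simp] lemma multiplicity_empty (C : Finset (ι → α)) (X : ι → Selector c) :
    multiplicity ∅ C X = #C := by
  simp [multiplicity, Selects]

lemma multiplicity_pos {X : ι → Selector c} :
    0 < multiplicity J C X ↔ ∃ t ∈ C, Selects J X t := by
  simp [multiplicity, card_pos, filter_nonempty_iff]

lemma CodeOn.multiplicity_le_one (h : CodeOn c J C) (X : ι → Selector c) :
    multiplicity J C X ≤ 1 := by
  refine card_le_one.2 fun t ht u hu => ?_
  rw [mem_filter] at ht hu
  exact h.eq_of_selects ht.1 hu.1 ht.2 hu.2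

lemma CodeOn.equivOn (hT : CodeOn c J T) (hU : CodeOn c J U)
    (h : ∀ X : ι → Selector c, (∃ t ∈ T, Selects J X t) ↔ ∃ u ∈ U, Selects J X u) :
    EquivOn c J T U := by
  intro X
  have hpos := h X
  rw [← multiplicity_pos, ← multiplicity_pos] at hpos
  have hT1 := hT.multiplicity_le_one X
  have hU1 := hU.multiplicity_le_one X
  omega

lemma EquivOn.symm (h : EquivOn c J T U) : EquivOn c J U T := fun X => (h X).symm

lemma EquivOn.exists_selects (h : EquivOn c J T U) {X : ι → Selector c} (hu : u ∈ U)
    (hX : Selects J X u) : ∃ t ∈ T, Selects J X t := by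
  rw [← multiplicity_pos, h X]
  exact multiplicity_pos.2 ⟨u, hu, hX⟩

lemma multiplicity_filter_flip [DecidableEq α] (hc : IsComplementation c) (C : Finset (ι → α))
    (i : ι) {x : Selector c} (hx : x s) (X : ι → Selector c) :
    multiplicity J {t ∈ C | x (t i)} X + multiplicity J (letterClass C i (c s)) X =
      multiplicity J {t ∈ C | x.flip hc s (t i)} X + multiplicity J (letterClass C i s) X := by
  simp only [multiplicity, letterClass, filter_filter, card_filter, ← sum_add_distrib]
  refine sum_congr rfl fun t _ => ?_
  have hxs := x.apply_compl s
  have hne := hc.ne_self s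
  by_cases hs : t i = s <;> by_cases hs' : t i = c s <;> simp_all [Selector.flip]

lemma multiplicity_update [DecidableEq ι] (hi : i ∈ J) (X : ι → Selector c) (x : Selector c) :
    multiplicity J C (Function.update X i x) = multiplicity (J.erase i) {t ∈ C | x (t i)} X := by
  simp only [multiplicity, selects_update hi, filter_filter]

lemma EquivOn.filter_selector [DecidableEq ι] (h : EquivOn c J T U) (hi : i ∈ J) (x : Selector c) :
    EquivOn c (J.erase i) {t ∈ T | x (t i)} {t ∈ U | x (t i)} := by
  intro X
  rw [← multiplicity_update hi, ← multiplicity_update hi, h]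

lemma EquivOn.erase [DecidableEq ι] (h : EquivOn c J T U) (i : ι) : EquivOn c (J.erase i) T U := by
  by_cases hi : i ∈ J
  · intro X
    have hsplit (C : Finset (ι → α)) : multiplicity (J.erase i) C X =
        multiplicity J C X + multiplicity J C (Function.update X i (X i).compl) := by
      conv_rhs => rw [← Function.update_eq_self i X]
      simp only [Function.update_idem, Function.update_self, multiplicity, selects_update hi]
      rw [← card_filter_add_card_filter_not (fun t : ι → α => X i (t i))]
      simp [filter_filter, Selector.compl, and_comm]
    rw [hsplit, hsplit, h, h]
  · rwa [erase_eq_of_notMem hi]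

lemma EquivOn.mono (h : EquivOn c J T U) (hKJ : K ⊆ J) : EquivOn c K T U := by
  classical
  suffices ∀ D : Finset ι, EquivOn c (J \ D) T U by
    simpa only [Finset.sdiff_sdiff_eq_self hKJ] using this (J \ K)
  intro D
  induction D using Finset.induction_on with
  | empty => simpa using h
  | insert i D _ ih => simpa only [sdiff_insert] using ih.erase i

lemma EquivOn.card_eq (hc : IsComplementation c) (h : EquivOn c J T U) : #T = #U := by
  classical
  obtain ⟨x, -⟩ := hc.exists_selector (A := ∅) (by simp)
  simpa only [multiplicity_empty] using h.mono (empty_subset J) fun _ => x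

/-- Moving a point across the pair `s, c s` at position `i` only affects the boxes of words with
one of these two letters there. -/
lemma EquivOn.multiplicity_letterClass [DecidableEq ι] [DecidableEq α] (hc : IsComplementation c)
    (h : EquivOn c J T U) (hi : i ∈ J) (s : α) (X : ι → Selector c) :
    multiplicity (J.erase i) (letterClass T i s) X +
        multiplicity (J.erase i) (letterClass U i (c s)) X =
      multiplicity (J.erase i) (letterClass U i s) X +
        multiplicity (J.erase i) (letterClass T i (c s)) X := by
  obtain ⟨x, hx⟩ := hc.exists_selector (A := {s}) (by simpa using (hc.ne_self s).symm)
  have hxs : x s := hx s rfl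
  have hT := multiplicity_filter_flip (J := J.erase i) hc T i hxs X
  have hU := multiplicity_filter_flip (J := J.erase i) hc U i hxs X
  have hx := h.filter_selector hi x X
  have hflip := h.filter_selector hi (x.flip hc s) X
  omega

lemma EquivOn.card_letterClass [DecidableEq α] (hc : IsComplementation c) (h : EquivOn c J T U)
    (hi : i ∈ J) (s : α) : #(letterClass T i s) + #(letterClass U i (c s)) =
      #(letterClass U i s) + #(letterClass T i (c s)) := by
  classical
  obtain ⟨x, -⟩ := hc.exists_selector (A := ∅) (by simp)
  simpa only [erase_singleton, multiplicity_empty] using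
    (h.mono (singleton_subset_iff.2 hi)).multiplicity_letterClass hc (mem_singleton_self i) s
      fun _ => x

/-! ### Minimal covers of a word -/

/-- `C` is a minimal cover of the word `u`, on the coordinates in `J`. -/
structure MinCoverOn (c : α → α) (J : Finset ι) (u : ι → α) (C : Finset (ι → α)) : Prop where
  codeOn : CodeOn c J C
  covers : ∀ X : ι → Selector c, Selects J X u → ∃ t ∈ C, Selects J X t
  not_dichOn : ∀ t ∈ C, ¬ DichOn c J t u

/-- `C` is a twin pair free minimal cover of `u` with at least two words, on the coordinates in
`J`. Requiring two words excludes the cover of `u` by itself. -/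
structure TwinFreeCover (c : α → α) (J : Finset ι) (u : ι → α) (C : Finset (ι → α)) : Prop
    extends MinCoverOn c J u C where
  twinFreeOn : TwinFreeOn c J C
  nontrivial : C.Nontrivial

/-- The positions of `J` at which not all words of `C` agree with `u`. -/
def activeCoords [DecidableEq α] (J : Finset ι) (C : Finset (ι → α)) (u : ι → α) : Finset ι :=
  {j ∈ J | ∃ t ∈ C, t j ≠ u j}

@[simp] lemma mem_activeCoords [DecidableEq α] :
    i ∈ activeCoords J C u ↔ i ∈ J ∧ ∃ t ∈ C, t i ≠ u i := mem_filter

lemma TwinFreeCover.exists_ne (hc : IsComplementation c) (h : TwinFreeCover c J u C) :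
    ∃ i ∈ J, ∃ t ∈ C, t i ≠ u i := by
  obtain ⟨t, ht, t', ht', hne⟩ := h.nontrivial
  obtain ⟨i, hi, e⟩ := h.codeOn ht ht' hne
  by_cases hti : t i = u i
  · exact ⟨i, hi, t', ht', fun ht'i => hc.ne_self (u i) (by rw [← ht'i, ← e, hti, ht'i])⟩
  · exact ⟨i, hi, t, ht, hti⟩

lemma MinCoverOn.covers_update [DecidableEq ι] (h : MinCoverOn c J u C)
    (hi : i ∈ J) {X : ι → Selector c}
    {x : Selector c} (hx : x (u i)) (hX : Selects (J.erase i) X u) :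
    ∃ t ∈ C, x (t i) ∧ Selects (J.erase i) X t := by
  simpa only [selects_update hi] using h.covers _ ((selects_update hi).2 ⟨hx, hX⟩)

lemma MinCoverOn.nontrivial (hc : IsComplementation c) (h : MinCoverOn c J u C)
    (hne : ∀ t ∈ C, ∃ j ∈ J, t j ≠ u j) : C.Nontrivial := by
  classical
  obtain ⟨X, hX⟩ := hc.exists_selects J u
  obtain ⟨t, ht, -⟩ := h.covers X hX
  obtain ⟨j, hj, htj⟩ := hne t ht
  obtain ⟨x, hxu, hxt⟩ := hc.exists_selector_pair (a := u j) (b := c (t j)) (by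
    rw [hc.involutive]; exact htj.symm)
  obtain ⟨t', ht', hxt', -⟩ := h.covers_update hj hxu fun k hk => hX k (mem_of_mem_erase hk)
  refine ⟨t, ht, t', ht', ?_⟩
  rintro rfl
  simp [x.apply_compl, hxt'] at hxt

lemma MinCoverOn.filter_selector [DecidableEq ι] (h : MinCoverOn c J u C)
    (hi : i ∈ J) {x : Selector c}
    (hx : x (u i)) : MinCoverOn c (J.erase i) u {t ∈ C | x (t i)} where
  codeOn := h.codeOn.filter_selector x i
  covers X hX := by simpa only [mem_filter, and_assoc] using h.covers_update hi hx hX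
  not_dichOn t ht := fun ⟨j, hj, e⟩ =>
    h.not_dichOn t (mem_filter.1 ht).1 ⟨j, mem_of_mem_erase hj, e⟩

/-- A selector that separates a point of `u`, together with the opposite selector, cuts a cover
that avoids all letters of `u` into two covers of one dimension less. -/
lemma MinCoverOn.two_pow_le_card (hc : IsComplementation c) (h : MinCoverOn c J u C)
    (hne : ∀ t ∈ C, ∀ j ∈ J, t j ≠ u j) : 2 ^ #J ≤ #C := by
  classical
  induction J using Finset.induction_on generalizing C with
  | empty =>
    obtain ⟨X, hX⟩ := hc.exists_selects ∅ u
    obtain ⟨t, ht, -⟩ := h.covers X hX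
    simpa using ⟨t, ht⟩
  | insert i J hi ih =>
    obtain ⟨x, hx, -⟩ := hc.exists_selector_pair (hc.ne_self (u i)).symm
    let y := x.compl.flip hc (u i)
    have hy : y (u i) := by simp [y, Selector.flip, Selector.compl, hx]
    have hiJ := mem_insert_self i J
    have hslice {z : Selector c} (hz : z (u i)) : 2 ^ #J ≤ #{t ∈ C | z (t i)} :=
      ih (by simpa [hi] using h.filter_selector hiJ hz) fun t ht j hj =>
        hne t (mem_filter.1 ht).1 j (mem_insert_of_mem hj)
    have hslices : ({t ∈ C | y (t i)} : Finset _) = {t ∈ C | ¬ x (t i)} := by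
      refine filter_congr fun t ht => ?_
      have htu : t i ≠ u i := hne t ht i hiJ
      have htu' : t i ≠ c (u i) := fun e => h.not_dichOn t ht ⟨i, hiJ, e⟩
      simp [y, Selector.flip, Selector.compl, htu, htu']
    have hxC := hslice hx
    have hyC := hslices ▸ hslice hy
    have hsplit := card_filter_add_card_filter_not (s := C) fun t => x (t i) = true
    rw [card_insert_of_notMem hi, pow_succ]
    omega

section OppositeLetters

variable [DecidableEq α]

/-- Crossing the walls of the letter `t i` at position `i`, a point of the box of `u` leaves the
box of `t`, and only a word with the complementary letter can take over. -/
lemma MinCoverOn.exists_swap [DecidableEq ι] (hc : IsComplementation c) (h : MinCoverOn c J u C)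
    (hi : i ∈ J) (ht : t ∈ C) (hti : t i ≠ u i) {X : ι → Selector c} (hXu : Selects (J.erase i) X u)
    (hXt : Selects (J.erase i) X t) :
    ∃ t' ∈ letterClass C i (c (t i)), Selects (J.erase i) X t' := by
  have htu : t i ≠ c (u i) := fun e => h.not_dichOn t ht ⟨i, hi, e⟩
  obtain ⟨x, hxt, hxu⟩ := hc.exists_selector_pair htu
  have hut : u i ≠ c (t i) := fun e => htu (hc.involutive.eq_iff.1 e.symm)
  obtain ⟨t', ht', hxt', hXt'⟩ := h.covers_update (x := x.flip hc (t i)) hi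
    (by simp [Selector.flip, hxu, hti.symm, hut]) hXu
  refine ⟨t', mem_letterClass.2 ⟨ht', ?_⟩, hXt'⟩
  have hne : t' i ≠ t i := fun e => by simp [Selector.flip, e, hxt] at hxt'
  by_contra hne'
  have hxt'' : x (t' i) := by simpa [Selector.flip, hne, hne'] using hxt'
  exact hne <| congrFun (h.codeOn.eq_of_selects ht' ht ((selects_update hi).2 ⟨hxt'', hXt'⟩)
    ((selects_update hi).2 ⟨hxt, hXt⟩)) i

lemma MinCoverOn.letterClass_compl_nonempty (hc : IsComplementation c) (h : MinCoverOn c J u C)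
    (hi : i ∈ J) (ht : t ∈ C) (hti : t i ≠ u i) : (letterClass C i (c (t i))).Nonempty := by
  classical
  obtain ⟨X, hXt, hXu⟩ := hc.exists_selects_both (h.not_dichOn t ht)
  obtain ⟨t', ht', -⟩ := h.exists_swap hc hi ht hti (fun k hk => hXu k (mem_of_mem_erase hk))
    fun k hk => hXt k (mem_of_mem_erase hk)
  exact ⟨t', ht'⟩

lemma MinCoverOn.eq_of_letterClass_compl_eq_singleton [DecidableEq ι] (hc : IsComplementation c)
    (h : MinCoverOn c J u C) (hi : i ∈ J) (ht : t ∈ C) (hti : t i ≠ u i)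
    (hv : letterClass C i (c (t i)) = {v}) (hj : j ∈ J.erase i) (hvj : v j ≠ u j) : t j = v j := by
  by_contra htv
  have hdich := h.not_dichOn t ht
  have htu : t j ≠ c (u j) := fun e => hdich ⟨j, mem_of_mem_erase hj, e⟩
  obtain ⟨x, hx⟩ := hc.exists_selector (A := {t j, u j, c (v j)}) (by
    have := hc.ne_self; have := hc.involutive; grind [Function.Involutive])
  have hxv : x (c (v j)) := hx _ (by simp)
  obtain ⟨X, hXt, hXu⟩ := hc.exists_selects_both hdich
  have hup {w : ι → α} (hXw : Selects J X w) (hxw : x (w j)) :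
      Selects (J.erase i) (Function.update X j x) w :=
    (selects_update hj).2 ⟨hxw, fun k hk => hXw k (by grind)⟩
  obtain ⟨t', ht', hXt'⟩ := h.exists_swap hc hi ht hti (hup hXu (hx _ (by simp)))
    (hup hXt (hx _ (by simp)))
  obtain rfl : t' = v := by simpa [hv] using ht'
  have hxv' := ((selects_update hj).1 hXt').1
  simp [x.apply_compl, hxv'] at hxv

lemma MinCoverOn.eq_of_mem_letterClass [DecidableEq ι] (hc : IsComplementation c)
    (h : MinCoverOn c J u C)
    (hi : i ∈ J) (hs : s ≠ u i) (hv : letterClass C i (c s) = {v}) {t₁ t₂ : ι → α}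
    (ht₁ : t₁ ∈ letterClass C i s) (ht₂ : t₂ ∈ letterClass C i s) (hj : j ∈ J)
    (hj' : j ∉ ({j ∈ J.erase i | v j = u j} : Finset ι)) : t₁ j = t₂ j := by
  obtain ⟨ht₁C, ht₁i⟩ := mem_letterClass.1 ht₁
  obtain ⟨ht₂C, ht₂i⟩ := mem_letterClass.1 ht₂
  by_cases hji : j = i
  · rw [hji, ht₁i, ht₂i]
  · have hjE := mem_erase.2 ⟨hji, hj⟩
    have hvj : v j ≠ u j := fun e => hj' (mem_filter.2 ⟨hjE, e⟩)
    rw [h.eq_of_letterClass_compl_eq_singleton hc hi ht₁C (ht₁i ▸ hs) (ht₁i ▸ hv) hjE hvj,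
      h.eq_of_letterClass_compl_eq_singleton hc hi ht₂C (ht₂i ▸ hs) (ht₂i ▸ hv) hjE hvj]

/-- If only one word `v` of the cover is opposite to `t` at `i`, then the words sharing the letter
`t i` only matter at the positions where `v` agrees with `u`. -/
lemma MinCoverOn.of_letterClass_compl_eq_singleton [DecidableEq ι] (hc : IsComplementation c)
    (h : MinCoverOn c J u C) (hi : i ∈ J) (ht : t ∈ C) (hti : t i ≠ u i)
    (hv : letterClass C i (c (t i)) = {v}) :
    MinCoverOn c {j ∈ J.erase i | v j = u j} u (letterClass C i (t i)) where
  codeOn := h.codeOn.restrict letterClass_subset fun t₁ ht₁ t₂ ht₂ j hj hj' => by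
    rw [h.eq_of_mem_letterClass hc hi hti hv ht₁ ht₂ hj hj']
    exact (hc.ne_self _).symm
  covers Y hY := by
    obtain ⟨hvC, hvi⟩ : v ∈ C ∧ v i = c (t i) := by rw [← mem_letterClass, hv, mem_singleton]
    have hvu : v i ≠ u i := fun e => h.not_dichOn t ht ⟨i, hi, by rw [← e, hvi, hc.involutive]⟩
    obtain ⟨X, hXv, hXu⟩ := hc.exists_selects_both (h.not_dichOn v hvC)
    have hYv : Selects {j ∈ J.erase i | v j = u j} Y v := fun j hj => by
      rw [(mem_filter.1 hj).2]; exact hY j hj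
    obtain ⟨t', ht', hZt'⟩ := h.exists_swap hc hi hvC hvu
      (selects_piecewise hY fun j hj => hXu j (mem_of_mem_erase hj))
      (selects_piecewise hYv fun j hj => hXv j (mem_of_mem_erase hj))
    rw [hvi, hc.involutive] at ht'
    refine ⟨t', ht', fun j hj => ?_⟩
    simpa only [piecewise_eq_of_mem _ _ _ hj] using hZt' j (mem_filter.1 hj).1
  not_dichOn := fun t' ht' ⟨j, hj, e⟩ => h.not_dichOn t' (letterClass_subset ht')
    ⟨j, mem_of_mem_erase (mem_filter.1 hj).1, e⟩

lemma TwinFreeCover.of_letterClass_compl_eq_singleton [DecidableEq ι] (hc : IsComplementation c)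
    (h : TwinFreeCover c J u C) (hi : i ∈ J) (ht : t ∈ C) (hti : t i ≠ u i)
    (hv : letterClass C i (c (t i)) = {v}) :
    TwinFreeCover c {j ∈ J.erase i | v j = u j} u (letterClass C i (t i)) := by
  have hcover := h.toMinCoverOn.of_letterClass_compl_eq_singleton hc hi ht hti hv
  refine { hcover with
    twinFreeOn := h.twinFreeOn.restrict letterClass_subset
      ((filter_subset _ _).trans (erase_subset i J)) fun t₁ ht₁ t₂ ht₂ j hj hj' =>
        h.eq_of_mem_letterClass hc hi hti hv ht₁ ht₂ hj hj'
    nontrivial := hcover.nontrivial hc fun t' ht' => ?_ }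
  obtain ⟨ht'C, ht'i⟩ := mem_letterClass.1 ht'
  obtain ⟨hvC, hvi⟩ : v ∈ C ∧ v i = c (t i) := by rw [← mem_letterClass, hv, mem_singleton]
  obtain ⟨j, hj, hji, hne⟩ := h.twinFreeOn t' ht'C v hvC i hi (by rw [ht'i, hvi, hc.involutive])
  have hjE := mem_erase.2 ⟨hji, hj⟩
  have hvj : v j = u j := by
    by_contra hvj
    exact hne <|
      h.eq_of_letterClass_compl_eq_singleton hc hi ht'C (ht'i ▸ hti) (ht'i ▸ hv) hjE hvj
  exact ⟨j, mem_filter.2 ⟨hjE, hvj⟩, hvj ▸ hne⟩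

lemma TwinFreeCover.two_le_card_or_exists [DecidableEq ι] (hc : IsComplementation c)
    (h : TwinFreeCover c J u C) (hi : i ∈ J) (ht : t ∈ C) (hti : t i ≠ u i) :
    2 ≤ #(letterClass C i (t i)) ∧ 2 ≤ #(letterClass C i (c (t i))) ∨
      ∃ J' ⊆ J.erase i, ∃ s, (s = t i ∨ s = c (t i)) ∧
        TwinFreeCover c J' u (letterClass C i s) := by
  have hstep {t : ι → α} (ht : t ∈ C) (hti : t i ≠ u i) :
      2 ≤ #(letterClass C i (c (t i))) ∨
        ∃ J' ⊆ J.erase i, TwinFreeCover c J' u (letterClass C i (t i)) := by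
    have hpos := (h.letterClass_compl_nonempty hc hi ht hti).card_pos
    by_cases h2 : 2 ≤ #(letterClass C i (c (t i)))
    · exact .inl h2
    · obtain ⟨v, hv⟩ := card_eq_one.1 (show #(letterClass C i (c (t i))) = 1 by omega)
      exact .inr ⟨_, filter_subset _ _, h.of_letterClass_compl_eq_singleton hc hi ht hti hv⟩
  obtain ⟨t', ht'⟩ := h.letterClass_compl_nonempty hc hi ht hti
  obtain ⟨ht'C, ht'i⟩ := mem_letterClass.1 ht'
  have ht'u : t' i ≠ u i := fun e =>
    h.not_dichOn t ht ⟨i, hi, by rw [← e, ht'i, hc.involutive]⟩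
  rcases hstep ht hti, hstep ht'C ht'u with ⟨h2' | ⟨J', hJ', hC⟩, h2 | ⟨J'', hJ'', hC'⟩⟩
  · rw [ht'i, hc.involutive] at h2
    exact .inl ⟨h2, h2'⟩
  · exact .inr ⟨J'', hJ'', _, .inr ht'i, hC'⟩
  all_goals exact .inr ⟨J', hJ', _, .inl rfl, hC⟩

lemma TwinFreeOn.three_le_card (h : TwinFreeOn c J C) (hC : CodeOn c J C)
    (hc : IsComplementation c) (hi : i ∈ J) (h2 : 2 ≤ #(letterClass C i s)) : 3 ≤ #J := by
  classical
  obtain ⟨t, ht, t', ht', hne⟩ := one_lt_card.1 h2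
  obtain ⟨j, hj, hdich⟩ := hC.restrict_letterClass hc i s ht ht' hne
  obtain ⟨hji, hjJ⟩ := mem_erase.1 hj
  obtain ⟨htC, hti⟩ := mem_letterClass.1 ht
  obtain ⟨ht'C, ht'i⟩ := mem_letterClass.1 ht'
  obtain ⟨k, hkJ, hkj, hk⟩ := h t htC t' ht'C j hjJ hdich
  have hki : k ≠ i := fun e => hk (by rw [e, hti, ht'i])
  calc 3 = #{i, j, k} := (card_eq_three.2 ⟨i, j, k, hji.symm, hki.symm, hkj.symm, rfl⟩).symm
    _ ≤ #J := card_le_card (by simp [insert_subset_iff, hi, hjJ, hkJ])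

lemma TwinFreeCover.exists_letterClass_cover [DecidableEq ι] (hc : IsComplementation c)
    (h : TwinFreeCover c J u C) (hi : i ∈ J) (ht : t ∈ C)
    (h2 : 2 ≤ #(letterClass C i (t i))) (h4 : ∀ t' ∈ C, t' i = t i ∨ t' i = c (t i)) :
    TwinFreeCover c (J.erase i) u (letterClass C i (t i)) := by
  obtain ⟨x, hxt, hxu⟩ := hc.exists_selector_pair fun e => h.not_dichOn t ht ⟨i, hi, e⟩
  have hslice : ({t' ∈ C | x (t' i)} : Finset _) = letterClass C i (t i) := by
    refine filter_congr fun t' ht' => ?_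
    rcases h4 t' ht' with e | e <;> simp [e, hxt, x.apply_compl, hc.ne_self]
  exact { hslice ▸ h.filter_selector hi hxu with
    twinFreeOn := h.twinFreeOn.restrict_letterClass i (t i)
    nontrivial := one_lt_card_iff_nontrivial.1 h2 }

end OppositeLetters

/-- A cover of at most four words would have only the letters `t i` and `c (t i)` at `i`, so that
one of the two classes is again a cover, in a smaller dimension. -/
theorem TwinFreeCover.card_bounds (hc : IsComplementation c) (h : TwinFreeCover c J u C) :
    3 ≤ #J ∧ 5 ≤ #C := by
  classical
  induction hn : #J using Nat.strong_induction_on generalizing J C with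
  | _ n ih =>
    subst hn
    obtain ⟨i, hi, t, ht, hti⟩ := h.exists_ne hc
    have hlt {J' : Finset ι} (hJ' : J' ⊆ J.erase i) : #J' < #J :=
      (card_le_card hJ').trans_lt (card_erase_lt_of_mem hi)
    rcases h.two_le_card_or_exists hc hi ht hti with ⟨h2, h2'⟩ | ⟨J', hJ', s, -, hC⟩
    · refine ⟨h.twinFreeOn.three_le_card h.codeOn hc hi h2, ?_⟩
      by_contra! h5
      have hletters (t' : ι → α) (ht' : t' ∈ C) : t' i = t i ∨ t' i = c (t i) := by
        by_contra! hne
        have hpos : 0 < #(letterClass C i (t' i)) :=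
          card_pos.2 ⟨t', mem_letterClass.2 ⟨ht', rfl⟩⟩
        have hpairs := hc.card_letterClass_pairs_le C i hne.1 hne.2
        omega
      have hslice := h.exists_letterClass_cover hc hi ht h2 hletters
      have h5' := (ih _ (hlt subset_rfl) hslice rfl).2
      exact absurd (h5'.trans (card_le_card letterClass_subset)) (by omega)
    · obtain ⟨hJ3, hC5⟩ := ih _ (hlt hJ') hC rfl
      exact ⟨hJ3.trans (hlt hJ').le, hC5.trans (card_le_card letterClass_subset)⟩

lemma TwinFreeCover.two_le_card_letterClass [DecidableEq α] (hc : IsComplementation c)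
    (h : TwinFreeCover c J u C) (hJ : #J ≤ 3) (hi : i ∈ J) (ht : t ∈ C) (hti : t i ≠ u i) :
    2 ≤ #(letterClass C i (t i)) ∧ 2 ≤ #(letterClass C i (c (t i))) := by
  classical
  refine (h.two_le_card_or_exists hc hi ht hti).resolve_right ?_
  rintro ⟨J', hJ', s, -, hC⟩
  have hJ3 := (hC.card_bounds hc).1
  have hlt := (card_le_card hJ').trans_lt (card_erase_lt_of_mem hi)
  omega

lemma TwinFreeCover.four_le_card_letterClass [DecidableEq α] (hc : IsComplementation c)
    (h : TwinFreeCover c J u C) (hi : i ∈ J) (ht : t ∈ C) (hti : t i ≠ u i) :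
    4 ≤ #(letterClass C i (t i)) + #(letterClass C i (c (t i))) := by
  classical
  rcases h.two_le_card_or_exists hc hi ht hti with h2 | ⟨J', -, s, rfl | rfl, hC⟩
  · omega
  all_goals
    have h5 := (hC.card_bounds hc).2
    omega

lemma TwinFreeCover.restrict_activeCoords [DecidableEq α] (hc : IsComplementation c)
    (h : TwinFreeCover c J u C) : TwinFreeCover c (activeCoords J C u) u C := by
  classical
  have hoff {t : ι → α} (ht : t ∈ C) {j : ι} (hj : j ∈ J)
      (hj' : j ∉ activeCoords J C u) : t j = u j := by
    by_contra hne
    exact hj' (mem_activeCoords.2 ⟨hj, t, ht, hne⟩)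
  have hsub : activeCoords J C u ⊆ J := filter_subset _ _
  exact {
    codeOn := h.codeOn.restrict Subset.rfl fun t ht t' ht' j hj hj' => by
      rw [hoff ht hj hj', hoff ht' hj hj']; exact (hc.ne_self _).symm
    covers := fun Y hY => by
      obtain ⟨X, hX⟩ := hc.exists_selects J u
      obtain ⟨t, ht, hZt⟩ := h.covers _ (selects_piecewise hY hX)
      refine ⟨t, ht, fun j hj => ?_⟩
      simpa only [piecewise_eq_of_mem _ _ _ hj] using hZt j (hsub hj)
    not_dichOn := fun t ht ⟨j, hj, e⟩ => h.not_dichOn t ht ⟨j, hsub hj, e⟩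
    twinFreeOn := h.twinFreeOn.restrict Subset.rfl hsub fun t ht t' ht' j hj hj' => by
      rw [hoff ht hj hj', hoff ht' hj hj']
    nontrivial := h.nontrivial }

/-! ### Tilings of a disjoint family -/

/-- `T` is a twin pair free code tiling the union of the boxes of the family `U`, and has no word
in common with `U`, on the coordinates in `J`. -/
structure TwinFreeTiling (c : α → α) (J : Finset ι) (U T : Finset (ι → α)) : Prop where
  codeOn : CodeOn c J T
  twinFreeOn : TwinFreeOn c J T
  equivOn : EquivOn c J T U
  disjointOn : DisjointOn J T U

/-- The words of `T` that are not dichotomous to `u`: the only ones that can help to cover `u`. -/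
def minCover [DecidableEq α] (c : α → α) (J : Finset ι) (T : Finset (ι → α)) (u : ι → α) :
    Finset (ι → α) :=
  {t ∈ T | ¬ DichOn c J t u}

lemma minCover_subset [DecidableEq α] : minCover c J T u ⊆ T := filter_subset _ _

lemma TwinFreeTiling.twinFreeCover [DecidableEq α] (hc : IsComplementation c)
    (h : TwinFreeTiling c J U T) (hu : u ∈ U) : TwinFreeCover c J u (minCover c J T u) := by
  have hcover : MinCoverOn c J u (minCover c J T u) := {
    codeOn := h.codeOn.mono (coe_subset.2 minCover_subset)
    covers := fun X hX => by
      obtain ⟨t, ht, hXt⟩ := h.equivOn.exists_selects hu hX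
      exact ⟨t, mem_filter.2 ⟨ht, hXt.not_dichOn hX⟩, hXt⟩
    not_dichOn := fun t ht => (mem_filter.1 ht).2 }
  exact { hcover with
    twinFreeOn := fun t ht t' ht' =>
      h.twinFreeOn t (minCover_subset ht) t' (minCover_subset ht')
    nontrivial := hcover.nontrivial hc fun t ht => h.disjointOn t (minCover_subset ht) u hu }

lemma TwinFreeTiling.five_le_card (hc : IsComplementation c) (h : TwinFreeTiling c J U T)
    (hu : u ∈ U) : 5 ≤ #T := by
  classical
  exact ((h.twinFreeCover hc hu).card_bounds hc).2.trans (card_le_card minCover_subset)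

section AtMostSevenWords

variable [DecidableEq α]

lemma TwinFreeTiling.restrict_letterClass [DecidableEq ι] (hc : IsComplementation c)
    (h : TwinFreeTiling c J U T) (hi : i ∈ J) (hU : ∀ u ∈ U, u i ≠ c s) :
    TwinFreeTiling c (J.erase i) ((letterClass T i (c s)).disjUnion (letterClass U i s)
      (disjoint_letterClass (hc.ne_self s))) (letterClass T i s) where
  codeOn := h.codeOn.restrict_letterClass hc i s
  twinFreeOn := h.twinFreeOn.restrict_letterClass i s
  equivOn X := by
    have hempty : letterClass U i (c s) = ∅ := filter_eq_empty_iff.2 hU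
    have hmul := h.equivOn.multiplicity_letterClass hc hi s X
    simp only [multiplicity, hempty, filter_empty, card_empty, filter_disjUnion,
      card_disjUnion] at hmul ⊢
    omega
  disjointOn t ht u hu := by
    rcases mem_disjUnion.1 hu with hu | hu
    · exact h.twinFreeOn.disjointOn_letterClass hc hi s t ht u hu
    · obtain ⟨htT, hti⟩ := mem_letterClass.1 ht
      obtain ⟨huU, hui⟩ := mem_letterClass.1 hu
      obtain ⟨j, hj, hne⟩ := h.disjointOn t htT u huU
      exact ⟨j, mem_erase.2 ⟨fun e => hne (by rw [e, hti, hui]), hj⟩, hne⟩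

lemma TwinFreeTiling.five_le_card_letterClass (hc : IsComplementation c)
    (h : TwinFreeTiling c J U T) (hi : i ∈ J) (hU : ∀ u ∈ U, u i ≠ c s)
    (hs : (letterClass T i (c s)).Nonempty) : 5 ≤ #(letterClass T i s) := by
  classical
  exact (h.restrict_letterClass hc hi hU).five_le_card hc (mem_disjUnion.2 (.inl hs.choose_spec))

/-- Two complementary pairs of letters at `i` would account for eight words of `T`. If there is
only one such pair `s, c s`, it does not occur in `U`, so that the classes of `s` and `c s` cover
each other. -/
lemma TwinFreeTiling.exists_inactive (hc : IsComplementation c) (h : TwinFreeTiling c J U T)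
    (hT : #T ≤ 7) (hU : U.Nonempty) (hi : i ∈ J) :
    ∃ u ∈ U, ∀ t ∈ minCover c J T u, t i = u i := by
  by_contra! hact
  have h4 {u t : ι → α} (hu : u ∈ U) (ht : t ∈ minCover c J T u) (htu : t i ≠ u i) :
      4 ≤ #(letterClass T i (t i)) + #(letterClass T i (c (t i))) :=
    ((h.twinFreeCover hc hu).four_le_card_letterClass hc hi ht htu).trans
      (add_le_add (card_letterClass_mono minCover_subset) (card_letterClass_mono minCover_subset))
  obtain ⟨u, hu⟩ := hU
  obtain ⟨t, ht, htu⟩ := hact u hu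
  have habsent (w : ι → α) (hw : w ∈ U) : w i ≠ t i ∧ w i ≠ c (t i) := by
    by_contra! hletter
    obtain ⟨t', ht', ht'w⟩ := hact w hw
    have ht'w' : t' i ≠ c (w i) := fun e => (mem_filter.1 ht').2 ⟨i, hi, e⟩
    have htt' : t' i ≠ t i ∧ t' i ≠ c (t i) := by
      have := hc.involutive (t i)
      grind
    have hpairs := hc.card_letterClass_pairs_le T i htt'.1 htt'.2
    have h4t := h4 hu ht htu
    have h4t' := h4 hw ht' ht'w
    omega
  have hts : t ∈ letterClass T i (t i) := mem_letterClass.2 ⟨minCover_subset ht, rfl⟩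
  have hcts := (h.twinFreeCover hc hu).letterClass_compl_nonempty hc hi ht htu
  have h5 := h.five_le_card_letterClass hc hi (fun w hw => (habsent w hw).2)
    (hcts.mono (filter_subset_filter _ minCover_subset))
  have h5' := h.five_le_card_letterClass (s := c (t i)) hc hi
    (by simpa only [hc.involutive (t i)] using fun w hw => (habsent w hw).1)
    (by simpa only [hc.involutive (t i)] using ⟨t, hts⟩)
  have hcard := sum_card_letterClass_le T i {t i, c (t i)}
  rw [sum_pair (hc.ne_self _).symm] at hcard
  omega

lemma TwinFreeTiling.exists_activeCoords_eq_erase [DecidableEq ι] (hc : IsComplementation c)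
    (h : TwinFreeTiling c J U T) (hJ : #J ≤ 4) (hT : #T ≤ 7) (hU : U.Nonempty) (hi : i ∈ J) :
    ∃ u ∈ U, activeCoords J (minCover c J T u) u = J.erase i := by
  obtain ⟨u, hu, hinact⟩ := h.exists_inactive hc hT hU hi
  have hsub : activeCoords J (minCover c J T u) u ⊆ J.erase i := fun j hj => by
    obtain ⟨hjJ, t, ht, hne⟩ := mem_activeCoords.1 hj
    exact mem_erase.2 ⟨fun e => hne (e ▸ hinact t ht), hjJ⟩
  have h3 := ((h.twinFreeCover hc hu).restrict_activeCoords hc).card_bounds hc |>.1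
  have hcard := card_erase_of_mem hi
  exact ⟨u, hu, eq_of_subset_of_card_le hsub (by omega)⟩

/-- All words covering `v` share the letter `v i`. Together with the two words for each of the
letters `s, c s` that occur at `i` in the cover of `u`, they exhaust `T`. -/
lemma TwinFreeTiling.apply_ne (hc : IsComplementation c) (h : TwinFreeTiling c J U T)
    (hT : #T ≤ 7) (hu : u ∈ U) (hu3 : #(activeCoords J (minCover c J T u) u) ≤ 3)
    (hi : i ∈ activeCoords J (minCover c J T u) u) (hv : v ∈ U)
    (hiv : i ∉ activeCoords J (minCover c J T v) v) (ht : t ∈ T) : t i ≠ u i := by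
  obtain ⟨hiJ, t₀, ht₀, ht₀u⟩ := mem_activeCoords.1 hi
  obtain ⟨h2, h2'⟩ :=
    ((h.twinFreeCover hc hu).restrict_activeCoords hc).two_le_card_letterClass hc hu3 hi ht₀ ht₀u
  replace h2 := h2.trans (card_letterClass_mono minCover_subset)
  replace h2' := h2'.trans (card_letterClass_mono minCover_subset)
  have h5 : 5 ≤ #(letterClass T i (v i)) := by
    refine ((h.twinFreeCover hc hv).card_bounds hc).2.trans (card_le_card fun t ht => ?_)
    refine mem_letterClass.2 ⟨minCover_subset ht, ?_⟩
    by_contra hne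
    exact hiv (mem_activeCoords.2 ⟨hiJ, t, ht, hne⟩)
  have h7 : 7 ≤ #(letterClass T i (t₀ i)) + #(letterClass T i (c (t₀ i))) := by
    by_cases e : v i = t₀ i
    · rw [e] at h5; omega
    · by_cases e' : v i = c (t₀ i)
      · rw [e'] at h5; omega
      · have hpairs := hc.card_letterClass_pairs_le T i e e'
        omega
  intro htu
  have hu₀ : u i ≠ c (t₀ i) := fun e =>
    (mem_filter.1 ht₀).2 ⟨i, hiJ, by rw [e, hc.involutive]⟩
  have hpairs := hc.card_letterClass_pairs_le T i ht₀u.symm hu₀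
  have hpos : 0 < #(letterClass T i (u i)) := card_pos.2 ⟨t, mem_letterClass.2 ⟨ht, htu⟩⟩
  omega

end AtMostSevenWords

theorem TwinFreeTiling.eight_le_card (hc : IsComplementation c) (h : TwinFreeTiling c J U T)
    (hJ : #J ≤ 4) (hU : U.Nonempty) : 8 ≤ #T := by
  classical
  by_contra! hT
  have hT7 : #T ≤ 7 := by omega
  have hactive {i : ι} (hi : i ∈ J) := h.exists_activeCoords_eq_erase hc hJ hT7 hU hi
  obtain ⟨u₀, hu₀⟩ := hU
  obtain ⟨k, hk, -⟩ := (h.twinFreeCover hc hu₀).exists_ne hc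
  obtain ⟨u, hu, huk⟩ := hactive hk
  have hcover := (h.twinFreeCover hc hu).restrict_activeCoords hc
  have h3 := (hcover.card_bounds hc).1
  have hgeneric : ∀ t ∈ minCover c J T u, ∀ i ∈ activeCoords J (minCover c J T u) u,
      t i ≠ u i := by
    intro t ht i hi
    obtain ⟨v, hv, hvi⟩ := hactive (mem_activeCoords.1 hi).1
    refine h.apply_ne hc hT7 hu ?_ hi hv (by simp [hvi]) (minCover_subset ht)
    rw [huk, card_erase_of_mem hk]
    omega
  have h8 : 8 ≤ #T := calc
    8 = 2 ^ 3 := rfl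
    _ ≤ 2 ^ #(activeCoords J (minCover c J T u) u) := Nat.pow_le_pow_right two_pos h3
    _ ≤ #(minCover c J T u) := hcover.two_pow_le_card hc hgeneric
    _ ≤ #T := card_le_card minCover_subset
  omega

lemma TwinFreeTiling.eight_le_card_letterClass [DecidableEq α] (hc : IsComplementation c)
    (h : TwinFreeTiling c J U T) (hJ : #J ≤ 5) (hi : i ∈ J) (hU : ∀ u ∈ U, u i ≠ c s)
    (hs : (letterClass T i (c s)).Nonempty) : 8 ≤ #(letterClass T i s) := by
  classical
  exact (h.restrict_letterClass hc hi hU).eight_le_card hc (by rw [card_erase_of_mem hi]; omega)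
    (hs.mono fun _ ht => mem_disjUnion.2 (.inl ht))

/-- Since `t` takes part in covering a word of `U` with another letter at `i`, the complementary
letter `c (t i)` must occur in `T`, although it does not occur in `U`. -/
lemma TwinFreeTiling.letterClass_bounds [DecidableEq α] (hc : IsComplementation c)
    (h : TwinFreeTiling c J U T)
    (hJ : #J ≤ 5) (ht : t ∈ T) (hdich : ∀ u ∈ U, ¬ DichOn c J u t) (hi : i ∈ activeCoords J U t) :
    #(letterClass U i (c (t i))) = 0 ∧ 0 < #(letterClass T i (c (t i))) ∧
      8 ≤ #(letterClass T i (t i)) := by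
  obtain ⟨hiJ, u, hu, hut⟩ := mem_activeCoords.1 hi
  have hU (u : ι → α) (hu : u ∈ U) : u i ≠ c (t i) := fun e => hdich u hu ⟨i, hiJ, e⟩
  have htu : t ∈ minCover c J T u := mem_filter.2 ⟨ht, fun ⟨j, hj, e⟩ =>
    hdich u hu ⟨j, hj, hc.involutive.eq_iff.1 e.symm⟩⟩
  have hs := ((h.twinFreeCover hc hu).letterClass_compl_nonempty hc hiJ htu hut.symm).mono
    (filter_subset_filter _ minCover_subset)
  exact ⟨card_eq_zero.2 (filter_eq_empty_iff.2 hU), hs.card_pos,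
    h.eight_le_card_letterClass hc hJ hiJ hU hs⟩

lemma TwinFreeTiling.three_le_card_activeCoords [DecidableEq α] (hc : IsComplementation c)
    (h : TwinFreeTiling c J U T) (hu : u ∈ U) (hdich : ∀ t ∈ T, ¬ DichOn c J t u) :
    3 ≤ #(activeCoords J T u) := by
  have hcover := h.twinFreeCover hc hu
  rw [minCover, filter_true_of_mem hdich] at hcover
  exact ((hcover.restrict_activeCoords hc).card_bounds hc).1

theorem TwinFreeTiling.sixteen_le_card (hc : IsComplementation c) {V W : Finset (ι → α)}
    (hV : TwinFreeTiling c J W V) (hW : TwinFreeTiling c J V W) (hJ : #J ≤ 5) {v w : ι → α}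
    (hv : v ∈ V) (hvW : ∀ q ∈ W, ¬ DichOn c J q v) (hw : w ∈ W)
    (hwV : ∀ p ∈ V, ¬ DichOn c J p w) : 16 ≤ #V := by
  classical
  have h3v := hW.three_le_card_activeCoords hc hv hvW
  have h3w := hV.three_le_card_activeCoords hc hw hwV
  obtain ⟨i, hi⟩ := inter_nonempty_of_card_lt_card_add_card (filter_subset _ J)
    (filter_subset _ J) (show #J < #(activeCoords J W v) + #(activeCoords J V w) by omega)
  obtain ⟨hiv, hiw⟩ := mem_inter.1 hi
  have hiJ := (mem_activeCoords.1 hiv).1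
  obtain ⟨hWv', hVv', hVv⟩ := hV.letterClass_bounds hc hJ hv hvW hiv
  obtain ⟨hVw', hWw', hWw⟩ := hW.letterClass_bounds hc hJ hw hwV hiw
  have hne : v i ≠ w i := fun e => by rw [e] at hVv'; omega
  have hne' : v i ≠ c (w i) := fun e => by rw [e] at hVv; omega
  have hbalance := hV.equivOn.card_letterClass hc hiJ (v i)
  have hbalance' := hV.equivOn.card_letterClass hc hiJ (w i)
  have hpairsV := hc.card_letterClass_pairs_le V i hne hne'
  have hpairsW := hc.card_letterClass_pairs_le W i hne hne'
  have hcard := hV.equivOn.card_eq hc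
  omega

/-! ### Polybox codes in all coordinates -/

variable {A : Type} {c : A → A} {V W : Finset (Fin d → A)} {v w : Fin d → A}

lemma dichOn_univ : DichOn c univ v w ↔ Dich c v w := by simp [DichOn, Dich]

lemma IsCode.codeOn_univ (h : IsCode c V) : CodeOn c univ V :=
  fun v hv w hw hne => dichOn_univ.2 (h v hv w hw hne)

lemma TwinPairFree.twinFreeOn_univ (h : TwinPairFree c V) : TwinFreeOn c univ V := by
  intro v hv w hw i _ e
  by_contra! heq
  exact h v hv w hw i ⟨e, fun j hj => heq j (mem_univ j) hj⟩

lemma disjointOn_univ (h : Disjoint V W) : DisjointOn univ V W := fun v hv w hw => by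
  simpa using Function.ne_iff.1 (disjoint_iff_ne.1 h v hv w hw)

lemma isRealization_selector (hc : IsComplementation c) :
    IsRealization c (fun _ : Fin d => Selector c) fun _ s => {x | x s} := by
  intro _ s
  obtain ⟨x, hx, -⟩ := hc.exists_selector_pair (hc.ne_self s).symm
  refine ⟨⟨x, hx⟩, fun h => ?_, Set.ext fun y => by simp [y.apply_compl]⟩
  have hx' : x.compl ∈ {y : Selector c | y s} := h.symm.subset (Set.mem_univ _)
  simp [Selector.compl, hx] at hx'

lemma CoveredWord.exists_selects (hc : IsComplementation c) (h : CoveredWord c w V)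
    {X : Fin d → Selector c} (hX : Selects univ X w) : ∃ v ∈ V, Selects univ X v := by
  have hXV := h _ _ (isRealization_selector hc) (show X ∈ box _ w from fun i => hX i (mem_univ i))
  simpa [box, Selects] using hXV

lemma Equivalent.equivOn_univ (hc : IsComplementation c) (h : Equivalent c V W)
    (hV : IsCode c V) (hW : IsCode c W) : EquivOn c univ V W :=
  hV.codeOn_univ.equivOn hW.codeOn_univ fun _ =>
    ⟨fun ⟨v, hv, hX⟩ => (h.1 v hv).exists_selects hc hX,
      fun ⟨w, hw, hX⟩ => (h.2 w hw).exists_selects hc hX⟩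

theorem twin_pair_free_min_covers_not_both_full_general {S : Type} {d : ℕ} (hd : d ≤ 5)
    (c : S → S) (hc : ∀ s, c (c s) = s) (hc' : ∀ s, c s ≠ s) (V W : Finset (Fin d → S))
    (hV : IsCode c V) (hW : IsCode c W) (hdisj : Disjoint V W) (heq : Equivalent c V W)
    (hcard : V.card ≤ 15) :
    ∀ v ∈ V, ∀ w ∈ W, ∀ Cv Cw : Finset (Fin d → S),
      Cv ⊆ W → Cw ⊆ V → TwinPairFree c Cv → TwinPairFree c Cw →
      (∀ q ∈ Cv, ¬ Dich c q v) → (∀ q ∈ Cw, ¬ Dich c q w) →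
      Cv.card < V.card ∨ Cw.card < V.card := by
  intro v hv w hw Cv Cw hCv hCw hfreeW hfreeV hdichv hdichw
  by_contra! hfull
  have hcompl : IsComplementation c := ⟨hc, hc'⟩
  have hequiv := heq.equivOn_univ hcompl hV hW
  obtain rfl : Cv = W := eq_of_subset_of_card_le hCv (hequiv.card_eq hcompl ▸ hfull.1)
  obtain rfl : Cw = V := eq_of_subset_of_card_le hCw hfull.2
  have hVtiles : TwinFreeTiling c univ Cv Cw :=
    ⟨hV.codeOn_univ, hfreeV.twinFreeOn_univ, hequiv, disjointOn_univ hdisj⟩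
  have hWtiles : TwinFreeTiling c univ Cw Cv :=
    ⟨hW.codeOn_univ, hfreeW.twinFreeOn_univ, hequiv.symm, disjointOn_univ hdisj.symm⟩
  have h16 := hVtiles.sixteen_le_card hcompl hWtiles (by simpa using hd) hv
    (fun q hq => mt dichOn_univ.1 (hdichv q hq)) hw fun p hp => mt dichOn_univ.1 (hdichw p hp)
  omega

end Covers

/-- Lemma "noN" of the paper. -/
theorem twin_pair_free_min_covers_not_both_full
    {S : Type} [Fintype S] [DecidableEq S] (c : S → S)
    (hc : ∀ s, c (c s) = s) (hc' : ∀ s, c s ≠ s)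
    (V W : Finset (Fin 5 → S)) (hV : IsCode c V) (hW : IsCode c W)
    (hdisj : Disjoint V W) (heq : Equivalent c V W) (hcard : V.card ≤ 15) :
    ∀ v ∈ V, ∀ w ∈ W, ∀ Cv Cw : Finset (Fin 5 → S),
      Cv ⊆ W → Cw ⊆ V → TwinPairFree c Cv → TwinPairFree c Cw →
      MinCoverWord c Cv v → MinCoverWord c Cw w →
      Cv.card < V.card ∨ Cw.card < V.card :=
  fun v hv w hw Cv Cw hCv hCw hfreeW hfreeV hmv hmw =>
    twin_pair_free_min_covers_not_both_full_general le_rfl c hc hc' V W hV hW hdisj heq hcard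
      v hv w hw Cv Cw hCv hCw hfreeW hfreeV hmv.2.2 hmw.2.2

end PolyboxPaper
end

section
/- Let V ⊆ S^4 be a cube tiling code, let Q be a simple component of V, and let U(Q) be the simple cube tiling code containing Q. Then it is possible to pass from V to U(Q) by gluing and cutting keeping Q fixed throughout the sequence of operations. -/
/- Common framework: polybox codes over a finite alphabet `S` with a
complementation `c : S → S` (an involution without fixed points). -/

namespace PolyboxPaper

variable {S : Type} [Fintype S] [DecidableEq S] {d : ℕ}

/-!
Let `Q ⊆ V ∩ U` with `U = {s₁, s₁'} × ⋯ × {s_d, s_d'}`, and call a letter at position `m` foreign if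
it is neither `s_m` nor `s_m'`. Recutting a twin pair whose letters in its own direction are
foreign keeps `Q` and lowers the number of foreign letters of the code.

If `V ≠ U`, some word `q ∈ V ∩ U` has its twin `u` in a direction `i` outside `V`. The words of `V`
that overlap `u` all have the letter `u_i` at position `i`. Replacing at some positions the indicator
of a box by the signed indicator of a letter gives a signed count over `V` whose total is `0`; a
negative term in it yields `w ∈ V` overlapping `u` such that complementing `w` at an odd set of
foreign positions, which avoids `i`, again gives a word of `V`. For `d ≤ 4` this set has one element,
which is a foreign twin pair, or three. In the latter case, either there is a foreign twin pair
anyway, or a twin pair in the third direction can be recut so that two foreign twin pairs appear,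
and the three operations together lower the number of foreign letters.
-/

section Selectors

variable {A : Type} {c : A → A}

/-- A selector picks exactly one letter of every complementary pair. A family of `d` selectors is a
point of the generic realization; it lies in the box of `v` when the `m`-th selector picks `v m`
for every `m`. -/
def IsSelector (c : A → A) (x : A → Bool) : Prop :=
  ∀ a, x (c a) = !x a

theorem exists_isSelector_forall_mem (hc : Function.Involutive c) (hc' : ∀ a, c a ≠ a)
    {T : Set A} (hT : ∀ a ∈ T, c a ∉ T) : ∃ x, IsSelector c x ∧ ∀ a ∈ T, x a = true := by
  classical
  let _ : LinearOrder A := linearOrderOfSTO WellOrderingRel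
  refine ⟨fun a => decide (a ∈ T ∨ c a ∉ T ∧ a < c a), fun a => ?_, fun a ha => by simp [ha]⟩
  by_cases ha : a ∈ T
  · simp [ha, hT a ha, hc a]
  · by_cases hca : c a ∈ T
    · simp [ha, hca, hc a]
    · rcases (hc' a).lt_or_gt with hlt | hlt <;> simp [ha, hca, hc a, hlt, hlt.le]

/-- The signed indicator of the letter `t`: it is `1` at `t`, `-1` at `c t` and `0` elsewhere. -/
def letterSign [DecidableEq A] (c : A → A) (t a : A) : ℤ :=
  if a = t then 1 else if a = c t then -1 else 0

theorem IsSelector.exists_letterSign_eq_sub [DecidableEq A] (hc : Function.Involutive c)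
    {x : A → Bool} (hx : IsSelector c x) {t : A} (ht : x t = true) :
    ∃ y, IsSelector c y ∧ ∀ a, letterSign c t a = (x a).toInt - (y a).toInt := by
  have hxt : x (c t) = false := by rw [hx, ht, Bool.not_true]
  have hct : c t ≠ t := fun h => by simp [h, ht] at hxt
  refine ⟨fun a => if a = t ∨ a = c t then !x a else x a, fun a => ?_, fun a => ?_⟩
  · have hpair : c a = t ∨ c a = c t ↔ a = t ∨ a = c t := by
      rw [hc.eq_iff, hc.injective.eq_iff, or_comm, eq_comm (a := a)]
    simp only [hpair, hx a]
    split_ifs <;> rfl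
  · by_cases hat : a = t
    · simp [letterSign, hat, ht]
    · by_cases hact : a = c t <;> simp [letterSign, hat, hact, hct, hxt]

end Selectors

section Tilings

variable {A : Type} {c : A → A} {V : Finset (Fin d → A)}

theorem not_dich_of_selected {x : Fin d → A → Bool} (hx : ∀ m, IsSelector c (x m))
    {v w : Fin d → A} (hv : ∀ m, x m (v m) = true) (hw : ∀ m, x m (w m) = true) :
    ¬ Dich c v w := by
  rintro ⟨m, hm⟩
  have := hv m
  simp [hm, hx m (w m), hw m] at this

theorem exists_selectors_of_not_dich (hc : Function.Involutive c) (hc' : ∀ a, c a ≠ a)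
    {v w : Fin d → A} (h : ¬ Dich c v w) :
    ∃ x : Fin d → A → Bool, (∀ m, IsSelector c (x m)) ∧
      (∀ m, x m (v m) = true) ∧ ∀ m, x m (w m) = true := by
  have hpair : ∀ m, ∀ a ∈ ({v m, w m} : Set A), c a ∉ ({v m, w m} : Set A) := by
    have hvw : ∀ m, v m ≠ c (w m) := fun m hm => h ⟨m, hm⟩
    rintro m a (rfl | rfl) (ha | ha)
    · exact hc' _ ha
    · exact hvw m (hc.eq_iff.1 ha)
    · exact hvw m ha.symm
    · exact hc' _ ha
  choose x hx hmem using fun m => exists_isSelector_forall_mem hc hc' (hpair m)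
  exact ⟨x, hx, fun m => hmem m _ (by simp), fun m => hmem m _ (by simp)⟩

theorem not_dich_self (hc' : ∀ a, c a ≠ a) (v : Fin d → A) : ¬ Dich c v v :=
  fun ⟨m, hm⟩ => hc' (v m) hm.symm

theorem Dich.symm (hc : Function.Involutive c) {v w : Fin d → A} : Dich c v w → Dich c w v :=
  fun ⟨m, hm⟩ => ⟨m, hc.eq_iff.1 hm.symm⟩

/- Dichotomous words have different bit patterns `m ↦ x m (v m)`, and there are only `2 ^ d`
patterns, so each of them occurs exactly once in `V`. -/
theorem CubeTiling.existsUnique_selected (hV : CubeTiling c V) {x : Fin d → A → Bool}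
    (hx : ∀ m, IsSelector c (x m)) : ∃! v, v ∈ V ∧ ∀ m, x m (v m) = true := by
  let pattern : V → Fin d → Bool := fun v m => x m (v.1 m)
  have hinj : Function.Injective pattern := by
    intro v w hvw
    by_contra hne
    obtain ⟨m, hm⟩ := hV.1 v v.2 w w.2 (Subtype.coe_ne_coe.2 hne)
    have hbit : x m (v.1 m) = x m (w.1 m) := congrFun hvw m
    simp [hm, hx m (w.1 m)] at hbit
  have hbij : Function.Bijective pattern :=
    (Fintype.bijective_iff_injective_and_card pattern).2 ⟨hinj, by simp [hV.2]⟩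
  obtain ⟨v, hv, huniq⟩ := hbij.existsUnique fun _ => true
  refine ⟨v, ⟨v.2, congrFun hv⟩, fun w ⟨hw, hwx⟩ => ?_⟩
  exact congrArg Subtype.val (huniq ⟨w, hw⟩ (funext hwx))

theorem CubeTiling.exists_mem_not_dich (hc : Function.Involutive c) (hc' : ∀ a, c a ≠ a)
    (hV : CubeTiling c V) {u y : Fin d → A} (huy : ¬ Dich c u y) :
    ∃ v ∈ V, ¬ Dich c v u ∧ ¬ Dich c v y := by
  obtain ⟨x, hx, hu, hy⟩ := exists_selectors_of_not_dich hc hc' huy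
  obtain ⟨v, ⟨hv, hvx⟩, -⟩ := hV.existsUnique_selected hx
  exact ⟨v, hv, not_dich_of_selected hx hvx hu, not_dich_of_selected hx hvx hy⟩

theorem CubeTiling.sum_prod_toInt (hV : CubeTiling c V) {x : Fin d → A → Bool}
    (hx : ∀ m, IsSelector c (x m)) : ∑ v ∈ V, ∏ m, (x m (v m)).toInt = 1 := by
  obtain ⟨v, ⟨hv, hvx⟩, huniq⟩ := hV.existsUnique_selected hx
  rw [Finset.sum_eq_single_of_mem v hv, Finset.prod_eq_one fun m _ => by rw [hvx m]; rfl]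
  intro w hw hwv
  obtain ⟨m, hm⟩ : ∃ m, x m (w m) = false := by
    by_contra! hall
    exact hwv (huniq w ⟨hw, fun m => by simpa using hall m⟩)
  exact Finset.prod_eq_zero (Finset.mem_univ m) (by rw [hm]; rfl)

theorem CubeTiling.sum_prod_sum_mul_toInt (hV : CubeTiling c V) {ι : Type*} [Fintype ι]
    {x : Fin d → ι → A → Bool} (hx : ∀ m k, IsSelector c (x m k)) (μ : Fin d → ι → ℤ) :
    ∑ v ∈ V, ∏ m, ∑ k, μ m k * (x m k (v m)).toInt = ∏ m, ∑ k, μ m k := by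
  classical
  calc ∑ v ∈ V, ∏ m, ∑ k, μ m k * (x m k (v m)).toInt
      = ∑ κ : Fin d → ι, (∏ m, μ m (κ m)) * ∑ v ∈ V, ∏ m, (x m (κ m) (v m)).toInt := by
        simp only [Fintype.prod_sum, Finset.prod_mul_distrib, Finset.mul_sum]
        exact Finset.sum_comm
    _ = ∏ m, ∑ k, μ m k := by
        simp only [hV.sum_prod_toInt fun m => hx m _, mul_one, Fintype.prod_sum]

theorem CubeTiling.sum_prod_letterSign [DecidableEq A] (hc : Function.Involutive c)
    (hV : CubeTiling c V) {x : Fin d → A → Bool} (hx : ∀ m, IsSelector c (x m)) {w : Fin d → A}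
    (hw : ∀ m, x m (w m) = true) {B : Finset (Fin d)} (hB : B.Nonempty) :
    ∑ v ∈ V, ∏ m, (if m ∈ B then letterSign c (w m) (v m) else (x m (v m)).toInt) = 0 := by
  choose y hy hsign using fun m => (hx m).exists_letterSign_eq_sub hc (hw m)
  have hxy : ∀ m (k : Bool), IsSelector c (bif k then x m else y m)
    | m, true => hx m
    | m, false => hy m
  have hsum := hV.sum_prod_sum_mul_toInt hxy
    fun m k => bif k then 1 else if m ∈ B then -1 else 0
  obtain ⟨b, hb⟩ := hB
  rw [Finset.prod_eq_zero (Finset.mem_univ b) (by simp [hb])] at hsum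
  rw [← hsum]
  refine Finset.sum_congr rfl fun v _ => Finset.prod_congr rfl fun m _ => ?_
  by_cases hm : m ∈ B <;> simp [hm, hsign, sub_eq_add_neg]

end Tilings

section Foreign

variable {A : Type} {c : A → A} {s t a : A}

/-- A letter is foreign to `t` if it lies outside the complementary pair of `t`. -/
def Foreign (c : A → A) (t a : A) : Prop :=
  a ≠ t ∧ a ≠ c t

instance [DecidableEq A] : Decidable (Foreign c t a) :=
  inferInstanceAs (Decidable (a ≠ t ∧ a ≠ c t))

theorem not_foreign_iff : ¬ Foreign c t a ↔ a = t ∨ a = c t := by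
  rw [Foreign, not_and_or, not_not, not_not]

theorem foreign_compl_right_iff (hc : Function.Involutive c) :
    Foreign c t (c a) ↔ Foreign c t a := by
  rw [Foreign, Foreign, Ne, Ne, hc.injective.eq_iff, hc.eq_iff, and_comm]

theorem foreign_compl_left_iff (hc : Function.Involutive c) :
    Foreign c (c t) a ↔ Foreign c t a := by
  rw [Foreign, Foreign, hc t, and_comm]

theorem foreign_congr_left (hc : Function.Involutive c) (hst : ¬ Foreign c s t) :
    Foreign c t a ↔ Foreign c s a := by
  obtain rfl | rfl := not_foreign_iff.1 hst
  · rfl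
  · exact foreign_compl_left_iff hc

theorem foreign_of_not_dich {v w : Fin d → A} {m : Fin d} (h : ¬ Dich c v w) (hm : v m ≠ w m) :
    Foreign c (w m) (v m) :=
  ⟨hm, fun hvw => h ⟨m, hvw⟩⟩

end Foreign

section ComplOn

variable {A : Type} {c : A → A} {E : Finset (Fin d)} {v : Fin d → A} {m : Fin d}

/-- The word obtained from `v` by complementing its letters at the positions in `E`. In particular
`complOn c {i} v` is the twin of `v` in the `i`-th direction. -/
def complOn (c : A → A) (E : Finset (Fin d)) (v : Fin d → A) : Fin d → A :=
  E.piecewise (c ∘ v) v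

theorem complOn_of_mem (hm : m ∈ E) : complOn c E v m = c (v m) :=
  Finset.piecewise_eq_of_mem _ _ _ hm

theorem complOn_of_notMem (hm : m ∉ E) : complOn c E v m = v m :=
  Finset.piecewise_eq_of_notMem _ _ _ hm

theorem complOn_singleton_self {i : Fin d} : complOn c {i} v i = c (v i) :=
  complOn_of_mem (Finset.mem_singleton_self i)

theorem complOn_singleton_of_ne {i : Fin d} (hm : m ≠ i) : complOn c {i} v m = v m :=
  complOn_of_notMem (Finset.notMem_singleton.2 hm)

theorem complOn_singleton_ne (hc' : ∀ a, c a ≠ a) {i : Fin d} : complOn c {i} v ≠ v :=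
  fun h => hc' (v i) (complOn_singleton_self.symm.trans (congrFun h i))

theorem twinPair_complOn_singleton (hc : Function.Involutive c) {i : Fin d} :
    TwinPair c v (complOn c {i} v) i :=
  ⟨by rw [complOn_singleton_self, hc], fun _ hm => (complOn_singleton_of_ne hm).symm⟩

theorem foreign_complOn_iff (hc : Function.Involutive c) {t : A} :
    Foreign c t (complOn c E v m) ↔ Foreign c t (v m) := by
  by_cases hm : m ∈ E
  · rw [complOn_of_mem hm, foreign_compl_right_iff hc]
  · rw [complOn_of_notMem hm]

end ComplOn

section OddComplement

variable {A : Type} {c : A → A} {V : Finset (Fin d → A)}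

theorem letterSign_ne_zero_iff [DecidableEq A] {t a : A} :
    letterSign c t a ≠ 0 ↔ a = t ∨ a = c t := by
  unfold letterSign
  split_ifs with hat hact <;> simp [*]

theorem CubeTiling.exists_prod_letterSign_neg [DecidableEq A] (hc : Function.Involutive c)
    (hV : CubeTiling c V) {x : Fin d → A → Bool} (hx : ∀ m, IsSelector c (x m)) {w : Fin d → A}
    (hwV : w ∈ V) (hw : ∀ m, x m (w m) = true) {B : Finset (Fin d)} (hB : B.Nonempty) :
    ∃ v ∈ V, ∏ m, (if m ∈ B then letterSign c (w m) (v m) else (x m (v m)).toInt) < 0 := by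
  have hprod : ∏ m, (if m ∈ B then letterSign c (w m) (w m) else (x m (w m)).toInt) = 1 :=
    Finset.prod_eq_one fun m _ => by simp [letterSign, hw m]
  by_contra! hnonneg
  have hzero := (Finset.sum_eq_zero_iff_of_nonneg hnonneg).1 (hV.sum_prod_letterSign hc hx hw hB)
  exact one_ne_zero (hprod.symm.trans (hzero w hwV))

theorem eq_or_eq_compl_of_prod_letterSign_ne_zero [DecidableEq A] {x : Fin d → A → Bool}
    {v w : Fin d → A} {B : Finset (Fin d)}
    (h : ∏ m, (if m ∈ B then letterSign c (w m) (v m) else (x m (v m)).toInt) ≠ 0) :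
    (∀ m ∈ B, v m = w m ∨ v m = c (w m)) ∧ ∀ m ∉ B, x m (v m) = true := by
  have hfactor := fun m => Finset.prod_ne_zero_iff.1 h m (Finset.mem_univ m)
  refine ⟨fun m hm => ?_, fun m hm => ?_⟩ <;> specialize hfactor m
  · rwa [if_pos hm, letterSign_ne_zero_iff] at hfactor
  · rw [if_neg hm] at hfactor
    exact Bool.eq_true_of_not_eq_false fun hfalse => hfactor (by rw [hfalse]; rfl)

theorem exists_odd_eq_complOn_of_prod_neg [DecidableEq A] (hc' : ∀ a, c a ≠ a)
    {x : Fin d → A → Bool} {v w : Fin d → A} (hw : ∀ m, x m (w m) = true) {B : Finset (Fin d)}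
    (hvw : ∀ m ∉ B, v m = w m)
    (hneg : ∏ m, (if m ∈ B then letterSign c (w m) (v m) else (x m (v m)).toInt) < 0) :
    ∃ E ⊆ B, Odd E.card ∧ v = complOn c E w := by
  obtain ⟨hletter, -⟩ := eq_or_eq_compl_of_prod_letterSign_ne_zero hneg.ne
  let E : Finset (Fin d) := {m | v m ≠ w m}
  have hmem : ∀ {m}, m ∈ E ↔ v m ≠ w m := by simp [E]
  have hEB : E ⊆ B := fun m hm => by_contra fun hmB => hmem.1 hm (hvw m hmB)
  have hcompl : ∀ m ∈ E, v m = c (w m) := fun m hm =>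
    (hletter m (hEB hm)).resolve_left (hmem.1 hm)
  have hfactor : ∀ m, (if m ∈ B then letterSign c (w m) (v m) else (x m (v m)).toInt) =
      if m ∈ E then -1 else 1 := by
    intro m
    by_cases hm : m ∈ E
    · simp [hm, hEB hm, hcompl m hm, letterSign, hc']
    · simp [hm, not_not.1 (hmem.not.1 hm), letterSign, hw m]
  refine ⟨E, hEB, ?_, ?_⟩
  · by_contra heven
    simp only [hfactor, Finset.prod_ite_mem, Finset.univ_inter, Finset.prod_const,
      (Nat.not_odd_iff_even.1 heven).neg_one_pow] at hneg
    exact absurd hneg (by norm_num)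
  · funext m
    by_cases hm : m ∈ E
    · rw [complOn_of_mem hm, hcompl m hm]
    · rw [complOn_of_notMem hm, not_not.1 (hmem.not.1 hm)]

/- The letter signs at `w` on the set where `w` and `u` differ sum to `0` over `V`, and `w` itself
contributes `1`, so some `v` contributes `-1`. If no word of `V` overlapping `u` differs from `u` in
more positions than `w` does, `v` can differ from `w` only by complementary letters. -/
theorem CubeTiling.exists_odd_complOn_mem (hc : Function.Involutive c) (hc' : ∀ a, c a ≠ a)
    (hV : CubeTiling c V) {u : Fin d → A} (hu : u ∉ V) :
    ∃ w ∈ V, ¬ Dich c w u ∧ ∃ E : Finset (Fin d), Odd E.card ∧ (∀ m ∈ E, Foreign c (u m) (w m)) ∧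
      complOn c E w ∈ V := by
  classical
  let diff (v : Fin d → A) : Finset (Fin d) := {m | v m ≠ u m}
  have hdiff : ∀ {v m}, m ∈ diff v ↔ v m ≠ u m := by simp [diff]
  obtain ⟨w₀, hw₀, hw₀u, -⟩ := hV.exists_mem_not_dich hc hc' (not_dich_self hc' u)
  obtain ⟨w, hw, hmax⟩ := Finset.exists_max_image {v ∈ V | ¬ Dich c v u}
    (fun v => (diff v).card) ⟨w₀, Finset.mem_filter.2 ⟨hw₀, hw₀u⟩⟩
  obtain ⟨hwV, hwu⟩ := Finset.mem_filter.1 hw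
  have hB : (diff w).Nonempty := by
    obtain ⟨m, hm⟩ := Function.ne_iff.1 (ne_of_mem_of_not_mem hwV hu)
    exact ⟨m, hdiff.2 hm⟩
  obtain ⟨x, hx, hxw, hxu⟩ := exists_selectors_of_not_dich hc hc' hwu
  obtain ⟨v, hvV, hneg⟩ := hV.exists_prod_letterSign_neg hc hx hwV hxw hB
  obtain ⟨hvB, hvx⟩ := eq_or_eq_compl_of_prod_letterSign_ne_zero hneg.ne
  have hforeign : ∀ m ∈ diff w, Foreign c (u m) (v m) := fun m hm => by
    have hwm := foreign_of_not_dich hwu (hdiff.1 hm)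
    obtain hvm | hvm := hvB m hm <;> rw [hvm]
    exacts [hwm, (foreign_compl_right_iff hc).2 hwm]
  have hvu : ¬ Dich c v u := by
    rintro ⟨m, hm⟩
    by_cases hmB : m ∈ diff w
    · exact (hforeign m hmB).2 hm
    · have := hvx m hmB
      simp [hm, hx m (u m), hxu m] at this
  have heq : diff w = diff v := Finset.eq_of_subset_of_card_le
    (fun m hm => hdiff.2 (hforeign m hm).1) (hmax v (Finset.mem_filter.2 ⟨hvV, hvu⟩))
  have hvw : ∀ m ∉ diff w, v m = w m := fun m hm =>
    (not_not.1 (hdiff.not.1 (heq ▸ hm))).trans (not_not.1 (hdiff.not.1 hm)).symm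
  obtain ⟨E, hEB, hodd, rfl⟩ := exists_odd_eq_complOn_of_prod_neg hc' hxw hvw hneg
  exact ⟨w, hwV, hwu, E, hodd, fun m hm => foreign_of_not_dich hwu (hdiff.1 (hEB hm)), hvV⟩

end OddComplement

section Recut

section Code

variable {A : Type} {c : A → A} {V : Finset (Fin d → A)} {v w x y : Fin d → A} {i : Fin d}

theorem IsCode.dich_of_eqOn_ne (hc' : ∀ a, c a ≠ a)
    (hV : IsCode c V) (hv : v ∈ V) (hv' : complOn c {i} v ∈ V) (hx : x ∈ V) (hxv : x ≠ v)
    (hxv' : x ≠ complOn c {i} v) (hy : ∀ m, m ≠ i → y m = v m) : Dich c x y := by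
  obtain ⟨m, hm⟩ := hV x hx v hv hxv
  by_cases hmi : m = i
  · obtain ⟨n, hn⟩ := hV x hx _ hv' hxv'
    by_cases hni : n = i
    · subst hmi hni
      rw [complOn_singleton_self, hm] at hn
      exact absurd hn.symm (hc' _)
    · exact ⟨n, by rw [hn, complOn_singleton_of_ne hni, hy n hni]⟩
  · exact ⟨m, by rw [hm, hy m hmi]⟩

theorem IsCode.exists_ne_and_eq_compl (hV : IsCode c V) (hx : x ∈ V) (hw : w ∈ V)
    (hxy : ¬ Dich c x y) (hwy : Dich c w y) : ∃ m, y m ≠ w m ∧ x m = c (w m) := by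
  have hxw : x ≠ w := fun h => hxy (h ▸ hwy)
  obtain ⟨m, hm⟩ := hV x hx w hw hxw
  exact ⟨m, fun h => hxy ⟨m, h ▸ hm⟩, hm⟩

theorem IsCode.eq_compl_of_not_dich_complOn_singleton (hc : Function.Involutive c)
    (hV : IsCode c V) (hx : x ∈ V) (hw : w ∈ V) (hxw : ¬ Dich c x (complOn c {i} w)) :
    x i = c (w i) := by
  obtain ⟨m, hne, hm⟩ := hV.exists_ne_and_eq_compl hx hw hxw ⟨i, (twinPair_complOn_singleton hc).1⟩
  obtain rfl : m = i := by_contra fun hmi => hne (complOn_singleton_of_ne hmi)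
  exact hm

end Code

variable {A : Type} [DecidableEq A] {c : A → A} {V Q : Finset (Fin d → A)} {s v x : Fin d → A}
  {i : Fin d} {r : A}

/-- The result of the glue-and-cut operation that replaces the twin pair of `v` and its twin in the
`i`-th direction by the twin pair having the letters `r` and `c r` at position `i`. It is only
meaningful when `v` and its twin belong to `V`. -/
def recut (c : A → A) (V : Finset (Fin d → A)) (v : Fin d → A) (i : Fin d) (r : A) :
    Finset (Fin d → A) :=
  (V \ {v, complOn c {i} v}) ∪ {Function.update v i r, complOn c {i} (Function.update v i r)}

theorem mem_recut : x ∈ recut c V v i r ↔ (x ∈ V ∧ x ≠ v ∧ x ≠ complOn c {i} v) ∨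
    x = Function.update v i r ∨ x = complOn c {i} (Function.update v i r) := by
  simp only [recut, Finset.mem_union, Finset.mem_sdiff, Finset.mem_insert, Finset.mem_singleton,
    not_or]

theorem gcStep_recut (hc : Function.Involutive c) (hv : v ∈ V) (hv' : complOn c {i} v ∈ V) :
    GCStep c V (recut c V v i r) :=
  ⟨v, _, _, _, i, hv, hv', twinPair_complOn_singleton hc, twinPair_complOn_singleton hc,
    fun _ hm => Function.update_of_ne hm _ _, rfl⟩

theorem IsCode.recut (hc : Function.Involutive c) (hc' : ∀ a, c a ≠ a) (hV : IsCode c V)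
    (hv : v ∈ V) (hv' : complOn c {i} v ∈ V) : IsCode c (recut c V v i r) := by
  have hold : ∀ x ∈ V, x ≠ v → x ≠ complOn c {i} v →
      Dich c x (Function.update v i r) ∧ Dich c x (complOn c {i} (Function.update v i r)) :=
    fun x hx hxv hxv' =>
      ⟨hV.dich_of_eqOn_ne hc' hv hv' hx hxv hxv' fun m hm => Function.update_of_ne hm _ _,
        hV.dich_of_eqOn_ne hc' hv hv' hx hxv hxv' fun m hm => by
          rw [complOn_singleton_of_ne hm, Function.update_of_ne hm]⟩
  have hnew : Dich c (Function.update v i r) (complOn c {i} (Function.update v i r)) :=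
    ⟨i, (twinPair_complOn_singleton hc).1⟩
  intro x hx y hy hxy
  rw [mem_recut] at hx hy
  rcases hx with ⟨hx, hxv, hxv'⟩ | rfl | rfl <;> rcases hy with ⟨hy, hyv, hyv'⟩ | rfl | rfl
  · exact hV x hx y hy hxy
  · exact (hold x hx hxv hxv').1
  · exact (hold x hx hxv hxv').2
  · exact (hold y hy hyv hyv').1.symm hc
  · exact absurd rfl hxy
  · exact hnew
  · exact (hold y hy hyv hyv').2.symm hc
  · exact hnew.symm hc
  · exact absurd rfl hxy

theorem sum_recut {M : Type*} [AddCommMonoid M] (hc' : ∀ a, c a ≠ a)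
    (hV : IsCode c V) (hv : v ∈ V) (hv' : complOn c {i} v ∈ V) (f : (Fin d → A) → M) :
    ∑ w ∈ recut c V v i r, f w + (f v + f (complOn c {i} v)) = ∑ w ∈ V, f w +
      (f (Function.update v i r) + f (complOn c {i} (Function.update v i r))) := by
  have hdisj : Disjoint (V \ {v, complOn c {i} v})
      {Function.update v i r, complOn c {i} (Function.update v i r)} := by
    rw [Finset.disjoint_left]
    intro x hx hxr
    simp only [Finset.mem_sdiff, Finset.mem_insert, Finset.mem_singleton, not_or] at hx hxr
    obtain ⟨hx, hxv, hxv'⟩ := hx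
    refine not_dich_self hc' x (hV.dich_of_eqOn_ne hc' hv hv' hx hxv hxv' fun m hm => ?_)
    obtain rfl | rfl := hxr <;> simp [complOn_singleton_of_ne, hm]
  have hsub : {v, complOn c {i} v} ⊆ V :=
    Finset.insert_subset hv (Finset.singleton_subset_iff.2 hv')
  rw [PolyboxPaper.recut, Finset.sum_union hdisj, ← Finset.sum_sdiff hsub,
    Finset.sum_pair (complOn_singleton_ne hc').symm,
    Finset.sum_pair (complOn_singleton_ne hc').symm]
  abel

theorem CubeTiling.recut (hc : Function.Involutive c) (hc' : ∀ a, c a ≠ a) (hV : CubeTiling c V)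
    (hv : v ∈ V) (hv' : complOn c {i} v ∈ V) : CubeTiling c (recut c V v i r) := by
  refine ⟨hV.1.recut hc hc' hv hv', ?_⟩
  have hcard := sum_recut (r := r) hc' hV.1 hv hv' fun _ => 1
  rw [← hV.2, Finset.card_eq_sum_ones, Finset.card_eq_sum_ones]
  exact Nat.add_right_cancel hcard

theorem subset_recut (hc : Function.Involutive c) (hQV : Q ⊆ V)
    (hQ : ∀ w ∈ Q, ∀ m, ¬ Foreign c (s m) (w m)) {m : Fin d} (hvm : Foreign c (s m) (v m)) :
    Q ⊆ recut c V v i r := by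
  refine fun w hw => mem_recut.2 (Or.inl ⟨hQV hw, ?_, ?_⟩) <;> rintro rfl <;> refine hQ _ hw m ?_
  · exact hvm
  · exact (foreign_complOn_iff hc).2 hvm

end Recut

section ForeignCount

variable {A : Type} [DecidableEq A] {c : A → A} {V : Finset (Fin d → A)} {s v : Fin d → A}
  {i : Fin d} {r : A}

/-- The positions at which the letters of `v` are foreign to those of `s`. -/
def foreignPositions (c : A → A) (s v : Fin d → A) : Finset (Fin d) :=
  {m | Foreign c (s m) (v m)}

/-- The number of letters of the code `V` foreign to `s`: the quantity that the glue-and-cut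
operations are made to decrease. -/
def foreignCount (c : A → A) (s : Fin d → A) (V : Finset (Fin d → A)) : ℕ :=
  ∑ v ∈ V, (foreignPositions c s v).card

theorem mem_foreignPositions {m : Fin d} :
    m ∈ foreignPositions c s v ↔ Foreign c (s m) (v m) := by
  simp [foreignPositions]

theorem foreignPositions_complOn (hc : Function.Involutive c) (E : Finset (Fin d)) :
    foreignPositions c s (complOn c E v) = foreignPositions c s v := by
  ext m
  rw [mem_foreignPositions, mem_foreignPositions, foreign_complOn_iff hc]

theorem foreignCount_recut (hc : Function.Involutive c) (hc' : ∀ a, c a ≠ a) (hV : IsCode c V)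
    (hv : v ∈ V) (hv' : complOn c {i} v ∈ V) :
    foreignCount c s (recut c V v i r) + 2 * (foreignPositions c s v).card =
      foreignCount c s V + 2 * (foreignPositions c s (Function.update v i r)).card := by
  have hsum := sum_recut (r := r) hc' hV hv hv' fun w => (foreignPositions c s w).card
  rwa [foreignPositions_complOn hc, foreignPositions_complOn hc, ← two_mul, ← two_mul] at hsum

theorem foreignCount_recut_le (hc : Function.Involutive c) (hc' : ∀ a, c a ≠ a) (hV : IsCode c V)
    (hv : v ∈ V) (hv' : complOn c {i} v ∈ V) :
    foreignCount c s (recut c V v i r) ≤ foreignCount c s V + 2 := by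
  have hsub : foreignPositions c s (Function.update v i r) ⊆ insert i (foreignPositions c s v) := by
    intro m hm
    rw [mem_foreignPositions] at hm
    by_cases hmi : m = i
    · exact Finset.mem_insert.2 (Or.inl hmi)
    · rw [Function.update_of_ne hmi] at hm
      exact Finset.mem_insert_of_mem (mem_foreignPositions.2 hm)
  have hcard := (Finset.card_le_card hsub).trans (Finset.card_insert_le _ _)
  have hcount := foreignCount_recut (s := s) (r := r) hc hc' hV hv hv'
  omega

theorem foreignCount_recut_add_two_le (hc : Function.Involutive c) (hc' : ∀ a, c a ≠ a)
    (hV : IsCode c V) (hv : v ∈ V) (hv' : complOn c {i} v ∈ V) (hvi : Foreign c (s i) (v i)) :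
    foreignCount c s (recut c V v i (s i)) + 2 ≤ foreignCount c s V := by
  have hsub : foreignPositions c s (Function.update v i (s i)) ⊂ foreignPositions c s v := by
    refine Finset.ssubset_iff_subset_ne.2 ⟨fun m hm => ?_, fun h => ?_⟩
    · rw [mem_foreignPositions] at hm ⊢
      rcases eq_or_ne m i with rfl | hmi
      · exact hvi
      · rwa [Function.update_of_ne hmi] at hm
    · have hi := h.symm ▸ mem_foreignPositions.2 hvi
      exact (mem_foreignPositions.1 hi).1 (Function.update_self ..)
  have hcard := Finset.card_lt_card hsub
  have hcount := foreignCount_recut (s := s) (r := s i) hc hc' hV hv hv'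
  omega

end ForeignCount

section Bridge

theorem exists_eq_triple_of_card_eq_three {α : Type*} [DecidableEq α] {E : Finset α} {j k : α}
    (hE : E.card = 3) (hj : j ∈ E) (hk : k ∈ E) (hjk : j ≠ k) :
    ∃ l, j ≠ l ∧ k ≠ l ∧ E = {j, k, l} := by
  have hk' : k ∈ E.erase j := Finset.mem_erase.2 ⟨hjk.symm, hk⟩
  obtain ⟨l, hl⟩ := Finset.card_eq_one.1 (show ((E.erase j).erase k).card = 1 by
    rw [Finset.card_erase_of_mem hk', Finset.card_erase_of_mem hj, hE])
  have hmem : l ∈ (E.erase j).erase k := hl ▸ Finset.mem_singleton_self l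
  simp only [Finset.mem_erase] at hmem
  exact ⟨l, hmem.2.1.symm, hmem.1.symm, by
    rw [← hl, Finset.insert_erase hk', Finset.insert_erase hj]⟩

variable {A : Type} {c : A → A} {V : Finset (Fin d → A)} {s u w x z : Fin d → A}
  {i j k l : Fin d}

/-- `V` contains a twin pair in a direction in which its letters are foreign to `s`. Such a pair can
be recut to the letters of `s`. -/
def HasForeignTwin (c : A → A) (s : Fin d → A) (V : Finset (Fin d → A)) : Prop :=
  ∃ w ∈ V, ∃ i, complOn c {i} w ∈ V ∧ Foreign c (s i) (w i)

/-- `V` contains two words that differ by complementation at three positions `j`, `k`, `l`, with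
letters foreign to `s` at `j` and `k`, and a twin pair in direction `l` (the bridge) that agrees
with `complOn c {j} w` off `l`. Recutting the bridge to the letters of `w` at `l` creates twin pairs
in the directions `j` and `k`. -/
def HasForeignBridge (c : A → A) (s : Fin d → A) (V : Finset (Fin d → A)) : Prop :=
  ∃ w ∈ V, ∃ x ∈ V, ∃ j k l, j ≠ k ∧ j ≠ l ∧ k ≠ l ∧
    complOn c {j, k, l} w ∈ V ∧ complOn c {l} x ∈ V ∧ (∀ m, m ≠ l → x m = complOn c {j} w m) ∧
    Foreign c (s j) (w j) ∧ Foreign c (s k) (w k)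

theorem HasForeignTwin.congr (hc : Function.Involutive c) (hsu : ∀ m, ¬ Foreign c (s m) (u m)) :
    HasForeignTwin c u V → HasForeignTwin c s V :=
  fun ⟨w, hw, i, hw', hi⟩ => ⟨w, hw, i, hw', (foreign_congr_left hc (hsu i)).1 hi⟩

theorem HasForeignBridge.congr (hc : Function.Involutive c) (hsu : ∀ m, ¬ Foreign c (s m) (u m)) :
    HasForeignBridge c u V → HasForeignBridge c s V :=
  fun ⟨w, hw, x, hx, j, k, l, hjk, hjl, hkl, hv, hx', hxw, hj, hk⟩ =>
    ⟨w, hw, x, hx, j, k, l, hjk, hjl, hkl, hv, hx', hxw,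
      (foreign_congr_left hc (hsu j)).1 hj, (foreign_congr_left hc (hsu k)).1 hk⟩

theorem CubeTiling.exists_foreign_twin_of_forall_eq (hc : Function.Involutive c)
    (hc' : ∀ a, c a ≠ a) (hV : CubeTiling c V) (hu : u ∉ V)
    (heq : ∀ z ∈ V, ¬ Dich c z u → ∀ m, m ≠ i → z m = u m) :
    ∃ w ∈ V, complOn c {i} w ∈ V ∧ Foreign c (u i) (w i) := by
  obtain ⟨w, hw, hwu, E, hodd, hE, hv⟩ := hV.exists_odd_complOn_mem hc hc' hu
  have hsub : E ⊆ {i} := fun m hm =>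
    Finset.mem_singleton.2 (by_contra fun hmi => (hE m hm).1 (heq w hw hwu m hmi))
  obtain rfl | rfl := Finset.subset_singleton_iff.1 hsub
  · simp at hodd
  · exact ⟨w, hw, hv, hE i (Finset.mem_singleton_self i)⟩

/- Each of `x`, `w` and `complOn c {j, k, l} w` is dichotomous to `complOn c {l} x`, so it differs
from `z`; the position at which its letter is complementary to that of `z` can only be `l`, `j` and
`k` respectively. -/
theorem IsCode.eq_complOn_of_not_dich (hc : Function.Involutive c) (hV : IsCode c V)
    (hjk : j ≠ k) (hjl : j ≠ l) (hkl : k ≠ l) (hpos : ∀ m, m ≠ i → m = j ∨ m = k ∨ m = l)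
    (hw : w ∈ V) (hv : complOn c {j, k, l} w ∈ V) (hx : x ∈ V)
    (hxw : ∀ m, m ≠ l → x m = complOn c {j} w m) (hxl : Foreign c (w l) (x l)) (hz : z ∈ V)
    (hzx : ¬ Dich c z (complOn c {l} x)) {m : Fin d} (hmi : m ≠ i) :
    z m = complOn c {l} x m := by
  have hxj : x j = c (w j) := by rw [hxw j hjl, complOn_singleton_self]
  have hx_eq : ∀ n, n ≠ l → n ≠ j → x n = w n := fun n hnl hnj => by
    rw [hxw n hnl, complOn_singleton_of_ne hnj]
  have hzl : z l = c (x l) := hV.eq_compl_of_not_dich_complOn_singleton hc hz hx hzx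
  have hzj : z j = c (w j) := by
    obtain ⟨n, hne, hn⟩ := hV.exists_ne_and_eq_compl hz hw hzx ⟨j, by
      rw [complOn_singleton_of_ne hjl, hxj, hc]⟩
    have hnl : n ≠ l := by
      rintro rfl
      exact hxl.1 (hc.injective (hzl.symm.trans hn))
    obtain rfl : n = j := by_contra fun hnj =>
      hne (by rw [complOn_singleton_of_ne hnl, hx_eq n hnl hnj])
    exact hn
  have hzk : z k = w k := by
    obtain ⟨n, hne, hn⟩ := hV.exists_ne_and_eq_compl hz hv hzx ⟨k, by
      rw [complOn_of_mem (by simp), complOn_singleton_of_ne hkl, hx_eq k hkl hjk.symm]⟩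
    have hnl : n ≠ l := by
      rintro rfl
      rw [complOn_of_mem (by simp), hc] at hn
      exact hxl.2 (hc.eq_iff.1 (hzl.symm.trans hn))
    have hnj : n ≠ j := by
      rintro rfl
      exact hne (by rw [complOn_singleton_of_ne hnl, hxj, complOn_of_mem (by simp)])
    obtain rfl : n = k := by_contra fun hnk =>
      hne (by rw [complOn_singleton_of_ne hnl, hx_eq n hnl hnj,
        complOn_of_notMem (by simp [hnj, hnk, hnl])])
    rw [hn, complOn_of_mem (by simp), hc]
  obtain rfl | rfl | rfl := hpos m hmi
  · rw [hzj, complOn_singleton_of_ne hjl, hxj]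
  · rw [hzk, complOn_singleton_of_ne hkl, hx_eq m hkl hjk.symm]
  · rw [hzl, complOn_singleton_self]

theorem CubeTiling.exists_mem_adjacent_of_complOn_mem (hc : Function.Involutive c)
    (hc' : ∀ a, c a ≠ a) (hV : CubeTiling c V) (hw : w ∈ V) (hwu : ¬ Dich c w u)
    {E : Finset (Fin d)} (hE : ∀ m ∈ E, Foreign c (u m) (w m)) (hcard : 1 < E.card)
    (hv : complOn c E w ∈ V) :
    ∃ x ∈ V, ¬ Dich c x u ∧ ∃ j ∈ E, ∃ k ∈ E, j ≠ k ∧ ¬ Dich c x (complOn c {j} w) ∧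
      x j = c (w j) ∧ x k = w k := by
  obtain ⟨j, hj, k₀, hk₀, hjk₀⟩ := Finset.one_lt_card.1 hcard
  have huy : ¬ Dich c u (complOn c {j} w) := by
    rintro ⟨m, hm⟩
    by_cases hmj : m = j
    · subst hmj
      rw [complOn_singleton_self, hc] at hm
      exact (hE m hj).1 hm.symm
    · rw [complOn_singleton_of_ne hmj] at hm
      exact hwu (Dich.symm hc ⟨m, hm⟩)
  obtain ⟨x, hx, hxu, hxy⟩ := hV.exists_mem_not_dich hc hc' huy
  refine ⟨x, hx, hxu, j, hj, ?_⟩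
  obtain ⟨k, hne, hk⟩ := hV.1.exists_ne_and_eq_compl hx hv hxy ⟨k₀, by
    rw [complOn_of_mem hk₀, complOn_singleton_of_ne hjk₀.symm]⟩
  have hkj : k ≠ j := by
    rintro rfl
    exact hne (by rw [complOn_singleton_self, complOn_of_mem hj])
  have hkE : k ∈ E := by_contra fun hkE =>
    hne (by rw [complOn_singleton_of_ne hkj, complOn_of_notMem hkE])
  exact ⟨k, hkE, hkj.symm, hxy, hV.1.eq_compl_of_not_dich_complOn_singleton hc hx hw hxy,
    by rw [hk, complOn_of_mem hkE, hc]⟩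

theorem CubeTiling.hasForeignTwin_or_hasForeignBridge_of_complOn_mem (hc : Function.Involutive c)
    (hc' : ∀ a, c a ≠ a) (hV : CubeTiling c V) (hui : ∀ z ∈ V, ¬ Dich c z u → z i = u i)
    (hw : w ∈ V) (hwu : ¬ Dich c w u) {E : Finset (Fin d)} (hcard : E.card = 3)
    (hEi : ∀ m, m ∈ E ↔ m ≠ i) (hE : ∀ m ∈ E, Foreign c (u m) (w m)) (hv : complOn c E w ∈ V) :
    HasForeignTwin c u V ∨ HasForeignBridge c u V := by
  obtain ⟨x, hx, hxu, j, hj, k, hk, hjk, hxy, hxj, hxk⟩ :=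
    hV.exists_mem_adjacent_of_complOn_mem hc hc' hw hwu hE (by omega) hv
  obtain ⟨l, hjl, hkl, rfl⟩ := exists_eq_triple_of_card_eq_three hcard hj hk hjk
  have hpos : ∀ m, m ≠ i → m = j ∨ m = k ∨ m = l := fun m hm => by simpa using (hEi m).2 hm
  have hxi : x i = w i := (hui x hx hxu).trans (hui w hw hwu).symm
  have hxw : ∀ m, m ≠ l → x m = complOn c {j} w m := fun m hml => by
    by_cases hmj : m = j
    · rw [hmj, hxj, complOn_singleton_self]
    · rw [complOn_singleton_of_ne hmj]
      by_cases hmi : m = i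
      · rw [hmi, hxi]
      · obtain rfl : m = k := by simpa [hmj, hml] using hpos m hmi
        exact hxk
  by_cases hxl : x l = w l
  · have hxw' : x = complOn c {j} w := funext fun m => by
      by_cases hml : m = l
      · rw [hml, hxl, complOn_singleton_of_ne hjl.symm]
      · exact hxw m hml
    exact Or.inl ⟨w, hw, j, hxw' ▸ hx, hE j hj⟩
  by_cases hx' : complOn c {l} x ∈ V
  · exact Or.inr ⟨w, hw, x, hx, j, k, l, hjk, hjl, hkl, hv, hx', hxw, hE j hj, hE k hk⟩
  · have hxl' : Foreign c (w l) (x l) := by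
      rw [← complOn_singleton_of_ne (c := c) (v := w) hjl.symm]
      exact foreign_of_not_dich hxy (by rwa [complOn_singleton_of_ne hjl.symm])
    obtain ⟨z, hz, hz', hzi⟩ := hV.exists_foreign_twin_of_forall_eq hc hc' hx' fun z hz hzx m hmi =>
      hV.1.eq_complOn_of_not_dich hc hjk hjl hkl hpos hw hv hx hxw hxl' hz hzx hmi
    have hil : i ≠ l := fun h => by simpa [h] using hEi l
    rw [complOn_singleton_of_ne hil, hui x hx hxu] at hzi
    exact Or.inl ⟨z, hz, i, hz', hzi⟩

/- An odd set of foreign positions avoiding `i` has one or three elements when `d ≤ 4`, and in the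
latter case it is the complement of `i`. -/
theorem CubeTiling.hasForeignTwin_or_hasForeignBridge (hd : d ≤ 4) (hc : Function.Involutive c)
    (hc' : ∀ a, c a ≠ a) (hV : CubeTiling c V) {q : Fin d → A} (hq : q ∈ V)
    (hqi : complOn c {i} q ∉ V) :
    HasForeignTwin c q V ∨ HasForeignBridge c q V := by
  have hui : ∀ z ∈ V, ¬ Dich c z (complOn c {i} q) → z i = complOn c {i} q i := fun z hz hzq =>
    (hV.1.eq_compl_of_not_dich_complOn_singleton hc hz hq hzq).trans complOn_singleton_self.symm
  obtain ⟨w, hw, hwu, E, hodd, hE, hv⟩ := hV.exists_odd_complOn_mem hc hc' hqi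
  have hEi : E ⊆ Finset.univ.erase i := fun m hm => Finset.mem_erase.2
    ⟨by rintro rfl; exact (hE m hm).1 (hui w hw hwu), Finset.mem_univ m⟩
  have hcard := Finset.card_le_card hEi
  rw [Finset.card_erase_of_mem (Finset.mem_univ i), Finset.card_univ, Fintype.card_fin] at hcard
  have hqu : ∀ m, ¬ Foreign c (q m) (complOn c {i} q m) := fun m =>
    (foreign_complOn_iff hc).not.2 fun h => h.1 rfl
  suffices h : HasForeignTwin c (complOn c {i} q) V ∨ HasForeignBridge c (complOn c {i} q) V from
    h.imp (HasForeignTwin.congr hc hqu) (HasForeignBridge.congr hc hqu)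
  obtain hone | hthree : E.card = 1 ∨ E.card = 3 := by
    obtain ⟨n, hn⟩ := hodd
    omega
  · obtain ⟨j, rfl⟩ := Finset.card_eq_one.1 hone
    exact Or.inl ⟨w, hw, j, hv, hE j (Finset.mem_singleton_self j)⟩
  · have hEeq : E = Finset.univ.erase i := Finset.eq_of_subset_of_card_le hEi (by
      rw [Finset.card_erase_of_mem (Finset.mem_univ i), Finset.card_univ, Fintype.card_fin]
      omega)
    exact hV.hasForeignTwin_or_hasForeignBridge_of_complOn_mem hc hc' hui hw hwu hthree
      (fun m => by simp [hEeq]) hE hv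

end Bridge

section Reduction

variable {A : Type} [DecidableEq A] {c : A → A} {V Q : Finset (Fin d → A)} {s : Fin d → A}

theorem HasForeignTwin.exists_foreignCount_lt (hc : Function.Involutive c) (hc' : ∀ a, c a ≠ a)
    (hV : CubeTiling c V) (hQV : Q ⊆ V) (hQ : ∀ w ∈ Q, ∀ m, ¬ Foreign c (s m) (w m))
    (h : HasForeignTwin c s V) :
    ∃ W, CubeTiling c W ∧ Q ⊆ W ∧ GCFix c Q V W ∧ foreignCount c s W < foreignCount c s V := by
  obtain ⟨w, hw, i, hw', hi⟩ := h
  have hQW : Q ⊆ recut c V w i (s i) := subset_recut hc hQV hQ hi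
  have hlt := foreignCount_recut_add_two_le hc hc' hV.1 hw hw' hi
  exact ⟨_, hV.recut hc hc' hw hw', hQW, .single ⟨gcStep_recut hc hw hw', hQW⟩, by omega⟩

theorem mem_recut_of_ne {v x : Fin d → A} {i m : Fin d} {r : A} (hx : x ∈ V) (hmi : m ≠ i)
    (hm : x m ≠ v m) : x ∈ recut c V v i r :=
  mem_recut.2 (Or.inl ⟨hx, fun h => hm (congrFun h m), fun h =>
    hm ((congrFun h m).trans (complOn_singleton_of_ne hmi))⟩)

theorem subset_recut_bridge (hc : Function.Involutive c) (hc' : ∀ a, c a ≠ a) {w x : Fin d → A}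
    {j k l : Fin d} (hjk : j ≠ k) (hjl : j ≠ l) (hkl : k ≠ l) (hw : w ∈ V)
    (hv : complOn c {j, k, l} w ∈ V) (hxw : ∀ m, m ≠ l → x m = complOn c {j} w m) :
    ({w, complOn c {j} w, complOn c {j, k, l} w, complOn c {k} (complOn c {j, k, l} w)} :
      Finset (Fin d → A)) ⊆ recut c V x l (w l) := by
  have hxj : x j = c (w j) := by rw [hxw j hjl, complOn_singleton_self]
  have hxk : x k = w k := by rw [hxw k hkl, complOn_singleton_of_ne hjk.symm]
  have hupd : Function.update x l (w l) = complOn c {j} w := funext fun m => by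
    rcases eq_or_ne m l with rfl | hml
    · rw [Function.update_self, complOn_singleton_of_ne hjl.symm]
    · rw [Function.update_of_ne hml, hxw m hml]
  have hcompl : complOn c {k} (complOn c {j, k, l} w) = complOn c {l} (complOn c {j} w) := by
    funext m
    by_cases hmk : m = k
    · subst hmk
      rw [complOn_singleton_self, complOn_of_mem (by simp), hc, complOn_singleton_of_ne hkl,
        complOn_singleton_of_ne hjk.symm]
    · by_cases hml : m = l
      · subst hml
        rw [complOn_singleton_of_ne hmk, complOn_of_mem (by simp), complOn_singleton_self,
          complOn_singleton_of_ne hjl.symm]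
      · simp [complOn, Finset.piecewise, hmk, hml]
  simp only [Finset.insert_subset_iff, Finset.singleton_subset_iff, hcompl, ← hupd]
  refine ⟨mem_recut_of_ne hw hjl ?_, mem_recut.2 (.inr (.inl rfl)), mem_recut_of_ne hv hkl ?_,
    mem_recut.2 (.inr (.inr rfl))⟩
  · rw [hxj]
    exact (hc' _).symm
  · rw [hxk, complOn_of_mem (by simp)]
    exact hc' _

/- Recutting the bridge may create two foreign letters, but the two twin pairs it produces can then
be recut one after the other, and each of these steps removes at least two. -/
theorem HasForeignBridge.exists_foreignCount_lt (hc : Function.Involutive c) (hc' : ∀ a, c a ≠ a)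
    (hV : CubeTiling c V) (hQV : Q ⊆ V) (hQ : ∀ w ∈ Q, ∀ m, ¬ Foreign c (s m) (w m))
    (h : HasForeignBridge c s V) :
    ∃ W, CubeTiling c W ∧ Q ⊆ W ∧ GCFix c Q V W ∧ foreignCount c s W < foreignCount c s V := by
  obtain ⟨w, hw, x, hx, j, k, l, hjk, hjl, hkl, hv, hx', hxw, hj, hk⟩ := h
  have hxk : Foreign c (s k) (x k) := by
    rwa [hxw k hkl, complOn_singleton_of_ne hjk.symm]
  have hvk : Foreign c (s k) (complOn c {j, k, l} w k) := (foreign_complOn_iff hc).2 hk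
  have hsub := subset_recut_bridge hc hc' hjk hjl hkl hw hv hxw
  simp only [Finset.insert_subset_iff, Finset.singleton_subset_iff] at hsub
  set V₁ := recut c V x l (w l)
  obtain ⟨hw₁, hwj₁, hv₁, hvk₁⟩ := hsub
  set v := complOn c {j, k, l} w
  have hV₁ : CubeTiling c V₁ := hV.recut hc hc' hx hx'
  have hv₂ : v ∈ recut c V₁ w j (s j) := mem_recut_of_ne hv₁ hjk.symm (by
    simpa [v, complOn_of_mem] using hc' (w k))
  have hvk₂ : complOn c {k} v ∈ recut c V₁ w j (s j) := mem_recut_of_ne hvk₁ hjl.symm (by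
    rw [complOn_singleton_of_ne hkl.symm]
    simpa [v, complOn_of_mem] using hc' (w l))
  have hV₂ := hV₁.recut (r := s j) hc hc' hw₁ hwj₁
  have hQ₁ : Q ⊆ V₁ := subset_recut hc hQV hQ hxk
  have hQ₂ : Q ⊆ recut c V₁ w j (s j) := subset_recut hc hQ₁ hQ hj
  have hQ₃ : Q ⊆ recut c (recut c V₁ w j (s j)) v k (s k) := subset_recut hc hQ₂ hQ hvk
  have hcount₁ : foreignCount c s V₁ ≤ foreignCount c s V + 2 :=
    foreignCount_recut_le hc hc' hV.1 hx hx'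
  have hcount₂ := foreignCount_recut_add_two_le hc hc' hV₁.1 hw₁ hwj₁ hj
  have hcount₃ := foreignCount_recut_add_two_le hc hc' hV₂.1 hv₂ hvk₂ hvk
  refine ⟨_, hV₂.recut hc hc' hv₂ hvk₂, hQ₃, ?_, by omega⟩
  exact ((Relation.ReflTransGen.single ⟨gcStep_recut hc hx hx', hQ₁⟩).tail
    ⟨gcStep_recut hc hw₁ hwj₁, hQ₂⟩).tail ⟨gcStep_recut hc hv₂ hvk₂, hQ₃⟩

end Reduction

section SimpleTilings

variable {A : Type} {c : A → A} {V Q U : Finset (Fin d → A)} {s : Fin d → A}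

theorem exists_complOn_singleton_notMem (hc : Function.Involutive c) {v u : Fin d → A}
    (hv : v ∈ V) (hsv : ∀ m, ¬ Foreign c (s m) (v m)) (hu : u ∉ V)
    (hsu : ∀ m, ¬ Foreign c (s m) (u m)) :
    ∃ q ∈ V, (∀ m, ¬ Foreign c (s m) (q m)) ∧ ∃ i, complOn c {i} q ∉ V := by
  classical
  by_contra! hclosed
  have hmem : ∀ E : Finset (Fin d), complOn c E v ∈ V := by
    intro E
    induction E using Finset.induction_on with
    | empty => rwa [complOn, Finset.piecewise_empty]
    | insert i E hi ih =>
      have hstep := hclosed _ ih (fun m => (foreign_complOn_iff hc).not.2 (hsv m)) i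
      convert hstep using 1
      funext m
      by_cases hmi : m = i
      · subst hmi
        rw [complOn_singleton_self, complOn_of_notMem hi, complOn_of_mem (by simp)]
      · simp [complOn, Finset.piecewise, hmi]
  have huv : complOn c {m | u m ≠ v m} v = u := funext fun m => by
    by_cases hm : u m = v m
    · rw [complOn_of_notMem (by simp [hm]), hm]
    · rw [complOn_of_mem (by simp [hm])]
      have hum := (foreign_congr_left hc (hsv m)).not.2 (hsu m)
      exact ((not_foreign_iff.1 hum).resolve_left hm).symm
  exact hu (huv ▸ hmem _)

theorem SimpleCubeTiling.exists_mem_iff (hU : SimpleCubeTiling c U) :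
    ∃ s : Fin d → A, ∀ v, v ∈ U ↔ ∀ m, ¬ Foreign c (s m) (v m) := by
  obtain ⟨s, hs⟩ := hU
  exact ⟨s, fun v => by simp only [hs, not_foreign_iff]⟩

theorem SimpleCubeTiling.card (hc' : ∀ a, c a ≠ a) (hU : SimpleCubeTiling c U) :
    U.card = 2 ^ d := by
  classical
  obtain ⟨s, hs⟩ := hU
  have hpi : U = Fintype.piFinset fun m => {s m, c (s m)} := by
    ext v
    simp [hs]
  simp [hpi, Fintype.card_piFinset, Finset.card_pair (hc' _).symm]

theorem CubeTiling.exists_foreignCount_lt [DecidableEq A] (hd : d ≤ 4) (hc : Function.Involutive c)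
    (hc' : ∀ a, c a ≠ a) (hV : CubeTiling c V) (hU : ∀ v, v ∈ U ↔ ∀ m, ¬ Foreign c (s m) (v m))
    (hQne : Q.Nonempty) (hQV : Q ⊆ V) (hQU : Q ⊆ U) (hUV : ¬ U ⊆ V) :
    ∃ W, CubeTiling c W ∧ Q ⊆ W ∧ GCFix c Q V W ∧ foreignCount c s W < foreignCount c s V := by
  obtain ⟨v, hv⟩ := hQne
  obtain ⟨u, huU, huV⟩ := Finset.not_subset.1 hUV
  obtain ⟨q, hqV, hsq, i, hqi⟩ := exists_complOn_singleton_notMem hc (hQV hv)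
    ((hU v).1 (hQU hv)) huV ((hU u).1 huU)
  have hQs : ∀ w ∈ Q, ∀ m, ¬ Foreign c (s m) (w m) := fun w hw => (hU w).1 (hQU hw)
  obtain htwin | hbridge := hV.hasForeignTwin_or_hasForeignBridge hd hc hc' hqV hqi
  · exact (htwin.congr hc hsq).exists_foreignCount_lt hc hc' hV hQV hQs
  · exact (hbridge.congr hc hsq).exists_foreignCount_lt hc hc' hV hQV hQs

theorem simple_component_fixed_dim4_general [DecidableEq A] (hd : d ≤ 4)
    (hc : Function.Involutive c) (hc' : ∀ a, c a ≠ a) (hV : CubeTiling c V)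
    (hU : SimpleCubeTiling c U) (hQne : Q.Nonempty) (hQV : Q ⊆ V) (hQU : Q ⊆ U) :
    GCFix c Q V U := by
  obtain ⟨s, hs⟩ := hU.exists_mem_iff
  induction hn : foreignCount c s V using Nat.strong_induction_on generalizing V with
  | _ n ih =>
    subst hn
    by_cases hUV : U ⊆ V
    · rw [Finset.eq_of_subset_of_card_le hUV (by rw [hV.2, hU.card hc'])]
      exact .refl
    · obtain ⟨W, hW, hQW, hVW, hlt⟩ :=
        hV.exists_foreignCount_lt hd hc hc' hs hQne hQV hQU hUV
      exact hVW.trans (ih _ hlt hW hQW rfl)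

end SimpleTilings

/-- Theorem "stab4" of the paper. -/
theorem simple_component_fixed_dim4
    {S : Type} [Fintype S] [DecidableEq S] (c : S → S)
    (hc : ∀ s, c (c s) = s) (hc' : ∀ s, c s ≠ s)
    (V Q U : Finset (Fin 4 → S)) (hV : CubeTiling c V)
    (hQne : Q.Nonempty) (hU : SimpleCubeTiling c U) (hQ : Q = V ∩ U) :
    GCFix c Q V U :=
  simple_component_fixed_dim4_general le_rfl hc hc' hV hU hQne (hQ ▸ Finset.inter_subset_left)
    (hQ ▸ Finset.inter_subset_right)

end PolyboxPaper
end
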